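/- arXiv:1303.4040 — 4 statements merged into one kernel-verified Lean document; each statement's English description precedes it below -/
import Mathlib

section
/- For every κ > 2 there exists a constant C = C(κ) such that for every complex-valued F ∈ C_c^∞((0,∞)) (extended by zero to ℝ), ∫_ℝ |(Φ* F)(λ)| dλ ≤ C Σ_{n=0}^{2} sup_{t > 0} ( (1+|ln t|)^κ · t^n · |F^{(n)}(t)| ), where (Φ* F)(λ) = (2π)^{-1/2} ∫₀^∞ F(t) e^{iλt} dt is the inverse Fourier transform. -/
open MeasureTheory
open scoped ComplexOrder

noncomputable section

/-- Complex-valued test functions: smooth, compactly supported, support inside `(0,∞)`. -/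
def IsTestFun (f : ℝ → ℂ) : Prop :=
  ContDiff ℝ (⊤ : ℕ∞) f ∧ HasCompactSupport f ∧ tsupport f ⊆ Set.Ioi 0

/-- The logarithmic weight `(1 + |log t|) ^ (-κ)`. -/
def logWeight (κ t : ℝ) : ENNReal := ENNReal.ofReal ((1 + |Real.log t|) ^ (-κ))

lemma measurable_logWeight (κ : ℝ) : Measurable (logWeight κ) := by
  unfold logWeight
  fun_prop

lemma logWeight_inv (κ t : ℝ) : logWeight κ t⁻¹ = logWeight κ t := by
  simp [logWeight, Real.log_inv]

/-- The integral of the logarithmic weight against the Haar measure `dt / t` of `(0,∞)`. -/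
def logWeightIntegral (κ : ℝ) : ENNReal :=
  ∫⁻ t in Set.Ioi (0:ℝ), logWeight κ t * ENNReal.ofReal t⁻¹

lemma logWeightIntegral_lt_top {κ : ℝ} (hκ : 1 < κ) : logWeightIntegral κ < ⊤ := by
  have himage := lintegral_image_eq_lintegral_abs_deriv_mul (s := Set.univ) (f := Real.exp)
    (f' := Real.exp) MeasurableSet.univ (fun x _ => (Real.hasDerivAt_exp x).hasDerivWithinAt)
    Real.exp_injective.injOn (fun t => logWeight κ t * ENNReal.ofReal t⁻¹)
  rw [Set.image_univ, Real.range_exp, Measure.restrict_univ] at himage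
  rw [logWeightIntegral, himage]
  refine lt_of_eq_of_lt (lintegral_congr fun u => ?_)
    (finite_integral_one_add_norm (E := ℝ) (μ := volume) (r := κ) (by simpa using hκ))
  rw [mul_left_comm, ← ENNReal.ofReal_mul (abs_nonneg _), abs_of_pos (Real.exp_pos u),
    mul_inv_cancel₀ (Real.exp_pos u).ne']
  simp [logWeight]

lemma lintegral_Ioi_inv_sq {c : ℝ} (hc : 0 < c) :
    ∫⁻ s in Set.Ioi c, ENNReal.ofReal (s⁻¹ ^ 2) = ENNReal.ofReal c⁻¹ := by
  have heq : ∀ s ∈ Set.Ioi c, s⁻¹ ^ 2 = s ^ (-2 : ℝ) := fun s hs => by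
    rw [Real.rpow_neg (hc.trans hs).le, inv_pow]
    norm_num
  rw [setLIntegral_congr_fun measurableSet_Ioi (fun s hs => by rw [heq s hs]),
    ← ofReal_integral_eq_lintegral_ofReal (integrableOn_Ioi_rpow_of_lt (by norm_num) hc),
    integral_Ioi_rpow_of_lt (by norm_num) hc]
  · norm_num [Real.rpow_neg_one]
  · filter_upwards [self_mem_ae_restrict measurableSet_Ioi] with s hs
    exact Real.rpow_nonneg (hc.trans hs).le _

lemma lintegral_lintegral_Ioc_inv {w : ℝ → ENNReal} (hw : Measurable w) :
    ∫⁻ s in Set.Ioi (0:ℝ), ∫⁻ t in Set.Ioc 0 s⁻¹, w t =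
      ∫⁻ t in Set.Ioi (0:ℝ), w t * ENNReal.ofReal t⁻¹ := by
  have hset : MeasurableSet {p : ℝ × ℝ | p.2 ≤ p.1⁻¹} :=
    measurableSet_le measurable_snd measurable_fst.inv
  have hleft : ∀ s : ℝ, ∫⁻ t in Set.Ioc 0 s⁻¹, w t =
      ∫⁻ t in Set.Ioi (0:ℝ), {p : ℝ × ℝ | p.2 ≤ p.1⁻¹}.indicator (fun p => w p.2) (s, t) := by
    intro s
    rw [← Set.Ioi_inter_Iic, Set.inter_comm, ← Measure.restrict_restrict measurableSet_Iic,
      ← lintegral_indicator measurableSet_Iic]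
    rfl
  simp_rw [hleft]
  rw [lintegral_lintegral_swap (f := fun s t => {p : ℝ × ℝ | p.2 ≤ p.1⁻¹}.indicator
    (fun p => w p.2) (s, t)) ((hw.comp measurable_snd).indicator hset).aemeasurable]
  refine setLIntegral_congr_fun measurableSet_Ioi fun t (ht : 0 < t) => ?_
  have hright : ∀ s ∈ Set.Ioi (0:ℝ),
      {p : ℝ × ℝ | p.2 ≤ p.1⁻¹}.indicator (fun p => w p.2) (s, t) =
        (Set.Iic t⁻¹).indicator (fun _ => w t) s := by
    intro s hs
    simp only [Set.indicator, Set.mem_ofPred_eq, Set.mem_Iic, le_inv_comm₀ ht (Set.mem_Ioi.1 hs)]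
  rw [setLIntegral_congr_fun measurableSet_Ioi hright, lintegral_indicator measurableSet_Iic,
    Measure.restrict_restrict measurableSet_Iic, Set.inter_comm, Set.Ioi_inter_Iic,
    setLIntegral_const, Real.volume_Ioc, sub_zero]

lemma lintegral_mul_lintegral_Ioi_inv {w : ℝ → ENNReal} (hw : Measurable w) :
    ∫⁻ s in Set.Ioi (0:ℝ), ENNReal.ofReal (s⁻¹ ^ 2) *
        ∫⁻ t in Set.Ioi s⁻¹, w t * ENNReal.ofReal (t⁻¹ ^ 2) =
      ∫⁻ t in Set.Ioi (0:ℝ), w t * ENNReal.ofReal t⁻¹ := by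
  have hset : MeasurableSet {p : ℝ × ℝ | p.1⁻¹ < p.2} :=
    measurableSet_lt measurable_fst.inv measurable_snd
  have hleft : ∀ s ∈ Set.Ioi (0:ℝ), ENNReal.ofReal (s⁻¹ ^ 2) *
        ∫⁻ t in Set.Ioi s⁻¹, w t * ENNReal.ofReal (t⁻¹ ^ 2) =
      ∫⁻ t in Set.Ioi (0:ℝ), {p : ℝ × ℝ | p.1⁻¹ < p.2}.indicator
        (fun p => ENNReal.ofReal (p.1⁻¹ ^ 2) * (w p.2 * ENNReal.ofReal (p.2⁻¹ ^ 2))) (s, t) := by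
    intro s hs
    rw [← lintegral_const_mul _ (by fun_prop)]
    have hsub : Set.Ioi s⁻¹ ∩ Set.Ioi (0:ℝ) = Set.Ioi s⁻¹ :=
      Set.inter_eq_left.2 (Set.Ioi_subset_Ioi (inv_pos.2 hs).le)
    rw [← hsub, ← Measure.restrict_restrict measurableSet_Ioi,
      ← lintegral_indicator measurableSet_Ioi]
    rfl
  rw [setLIntegral_congr_fun measurableSet_Ioi hleft, lintegral_lintegral_swap
    (f := fun s t => {p : ℝ × ℝ | p.1⁻¹ < p.2}.indicator
      (fun p => ENNReal.ofReal (p.1⁻¹ ^ 2) * (w p.2 * ENNReal.ofReal (p.2⁻¹ ^ 2))) (s, t))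
    (Measurable.indicator (by fun_prop) hset).aemeasurable]
  refine setLIntegral_congr_fun measurableSet_Ioi fun t (ht : 0 < t) => ?_
  have hright : ∀ s ∈ Set.Ioi (0:ℝ), {p : ℝ × ℝ | p.1⁻¹ < p.2}.indicator
        (fun p => ENNReal.ofReal (p.1⁻¹ ^ 2) * (w p.2 * ENNReal.ofReal (p.2⁻¹ ^ 2))) (s, t) =
      (Set.Ioi t⁻¹).indicator
        (fun s => ENNReal.ofReal (s⁻¹ ^ 2) * (w t * ENNReal.ofReal (t⁻¹ ^ 2))) s := by
    intro s hs
    simp only [Set.indicator, Set.mem_ofPred_eq, Set.mem_Ioi, inv_lt_comm₀ hs ht]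
  have hsub : Set.Ioi t⁻¹ ∩ Set.Ioi (0:ℝ) = Set.Ioi t⁻¹ :=
    Set.inter_eq_left.2 (Set.Ioi_subset_Ioi (inv_pos.2 ht).le)
  rw [setLIntegral_congr_fun measurableSet_Ioi hright, lintegral_indicator measurableSet_Ioi,
    Measure.restrict_restrict measurableSet_Ioi, hsub, lintegral_mul_const _ (by fun_prop),
    lintegral_Ioi_inv_sq (inv_pos.2 ht), mul_left_comm, ← ENNReal.ofReal_mul (by positivity)]
  congr 2
  field_simp

/-- The majorant of the Fourier integral at frequency `s > 0`. -/
def fourierMajorant (κ s : ℝ) : ENNReal :=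
  2 * (logWeight κ s * ENNReal.ofReal s⁻¹) + (∫⁻ t in Set.Ioc 0 s⁻¹, logWeight κ t) +
    ENNReal.ofReal (s⁻¹ ^ 2) * ∫⁻ t in Set.Ioi s⁻¹, logWeight κ t * ENNReal.ofReal (t⁻¹ ^ 2)

lemma lintegral_fourierMajorant (κ : ℝ) :
    ∫⁻ s in Set.Ioi (0:ℝ), fourierMajorant κ s ≤ 4 * logWeightIntegral κ := by
  have hw := measurable_logWeight κ
  have hmeas : Measurable fun s : ℝ => ∫⁻ t in Set.Ioc 0 s⁻¹, logWeight κ t := by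
    have hset : MeasurableSet {p : ℝ × ℝ | p.2 ∈ Set.Ioc 0 p.1⁻¹} :=
      (measurableSet_lt measurable_const measurable_snd).inter
        (measurableSet_le measurable_snd measurable_fst.inv)
    simp_rw [← lintegral_indicator measurableSet_Ioc]
    exact ((hw.comp measurable_snd).indicator hset).lintegral_prod_right' (ν := volume)
  have hmeas_head : Measurable fun s : ℝ => 2 * (logWeight κ s * ENNReal.ofReal s⁻¹) := by
    fun_prop
  unfold fourierMajorant
  rw [lintegral_add_left (by fun_prop), lintegral_add_left hmeas_head,
    lintegral_const_mul _ (by fun_prop), lintegral_lintegral_Ioc_inv hw,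
    lintegral_mul_lintegral_Ioi_inv hw]
  change 2 * logWeightIntegral κ + logWeightIntegral κ + logWeightIntegral κ ≤ _
  exact le_of_eq (by ring)

lemma lintegral_comp_abs_le (g : ℝ → ENNReal) :
    ∫⁻ l : ℝ, g |l| ≤ 2 * ∫⁻ s in Set.Ioi (0:ℝ), g s := by
  have hunion : (Set.Iio (0:ℝ) ∪ Set.Ioi 0 : Set ℝ) =ᵐ[volume] (Set.univ : Set ℝ) := by
    rw [Set.Iio_union_Ioi]
    exact ae_eq_univ.2 (by simp)
  have hneg : ∫⁻ l in Set.Iio (0:ℝ), g |l| = ∫⁻ s in Set.Ioi (0:ℝ), g s := by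
    rw [← lintegral_indicator measurableSet_Iio, ← lintegral_indicator measurableSet_Ioi,
      ← lintegral_neg_eq_self]
    refine lintegral_congr fun s => ?_
    by_cases hs : 0 < s
    · simp [hs, abs_of_pos hs]
    · simp [hs]
  have hpos : ∫⁻ l in Set.Ioi (0:ℝ), g |l| = ∫⁻ s in Set.Ioi (0:ℝ), g s :=
    setLIntegral_congr_fun measurableSet_Ioi fun s hs => by rw [abs_of_pos hs]
  calc ∫⁻ l : ℝ, g |l| = ∫⁻ l in Set.Iio (0:ℝ) ∪ Set.Ioi 0, g |l| := by
        rw [setLIntegral_congr hunion, Measure.restrict_univ]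
    _ ≤ _ := lintegral_union_le _ _ _
    _ = _ := by rw [hneg, hpos, two_mul]

lemma IsTestFun.bddAbove_range {F : ℝ → ℂ} (hF : IsTestFun F) {κ : ℝ} (n : ℕ) :
    BddAbove (Set.range fun t : Set.Ioi (0:ℝ) =>
      (1 + |Real.log (t : ℝ)|) ^ κ * (t : ℝ) ^ n * ‖iteratedDeriv n F (t : ℝ)‖) := by
  obtain ⟨hsmooth, hcompact, hsupp⟩ := hF
  have hcont : ContinuousOn (fun t : ℝ => (1 + |Real.log t|) ^ κ * t ^ n * ‖iteratedDeriv n F t‖)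
      (tsupport F) := by
    have hD : Continuous (iteratedDeriv n F) :=
      hsmooth.continuous_iteratedDeriv n (by exact_mod_cast le_top)
    have hlog : ContinuousOn Real.log (tsupport F) :=
      Real.continuousOn_log.mono fun t ht => (hsupp ht).ne'
    refine ((ContinuousOn.rpow_const (by fun_prop) fun t _ => Or.inl ?_).mul
      (by fun_prop)).mul (by fun_prop)
    positivity
  obtain ⟨B, hB⟩ := hcompact.isCompact.bddAbove_image hcont
  refine ⟨max B 0, ?_⟩
  rintro _ ⟨t, rfl⟩
  by_cases ht : (t : ℝ) ∈ tsupport F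
  · exact (hB ⟨t, ht, rfl⟩).trans (le_max_left _ _)
  · have hzero : iteratedDeriv n F (t : ℝ) = 0 := by
      have : iteratedFDeriv ℝ n F (t : ℝ) = 0 := by
        by_contra h
        exact ht (support_iteratedFDeriv_subset n h)
      simp [iteratedDeriv, this]
    simp [hzero]

/-- Integrating twice by parts on `(a,∞)` bounds the Fourier integral of a test function. -/
lemma IsTestFun.enorm_fourier_le {F : ℝ → ℂ} (hF : IsTestFun F) {l a : ℝ} (hl : l ≠ 0)
    (ha : 0 < a) :
    ‖∫ t in Set.Ioi (0:ℝ), F t * Complex.exp (Complex.I * l * t)‖ₑ ≤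
      ‖iteratedDeriv 0 F a‖ₑ * ENNReal.ofReal |l|⁻¹ +
        ‖iteratedDeriv 1 F a‖ₑ * ENNReal.ofReal (|l|⁻¹ ^ 2) +
        (∫⁻ t in Set.Ioc 0 a, ‖iteratedDeriv 0 F t‖ₑ) +
        ENNReal.ofReal (|l|⁻¹ ^ 2) * ∫⁻ t in Set.Ioi a, ‖iteratedDeriv 2 F t‖ₑ := by
  obtain ⟨hsmooth, hcompact, -⟩ := hF
  have hlC : (l : ℂ) ≠ 0 := by exact_mod_cast hl
  set e : ℝ → ℂ := fun t => Complex.exp (Complex.I * l * t) with he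
  have he_norm : ∀ t, ‖e t‖ₑ = 1 := fun t => by
    rw [← ofReal_norm]
    simp only [he]
    rw [show Complex.I * l * t = ((l * t : ℝ) : ℂ) * Complex.I by
      push_cast; ring, Complex.norm_exp_ofReal_mul_I, ENNReal.ofReal_one]
  have he_deriv : ∀ t, HasDerivAt e (Complex.I * l * e t) t := fun t => by
    have := ((hasDerivAt_id t).ofReal_comp.const_mul (Complex.I * (l : ℂ))).cexp
    simpa [he, mul_comm] using this
  have he_smooth : ContDiff ℝ 1 e := by
    have : ContDiff ℝ 1 fun t : ℝ => (t : ℂ) := Complex.ofRealCLM.contDiff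
    exact (contDiff_const.mul this).cexp
  have hF2 : ContDiff ℝ 2 F := contDiff_infty.1 hsmooth 2
  have hF' : ContDiff ℝ 1 (deriv F) := hF2.deriv' (n := 1)
  have hD1 : iteratedDeriv 1 F = deriv F := iteratedDeriv_one
  have hD2 : iteratedDeriv 2 F = deriv (deriv F) := by
    rw [iteratedDeriv_succ, hD1]
  rw [iteratedDeriv_zero, hD1, hD2]
  set G : ℝ → ℂ := fun t => (F t * (Complex.I * l)⁻¹ + deriv F t * ((l : ℂ)⁻¹) ^ 2) * e t with hG
  have hG_smooth : ContDiff ℝ 1 G :=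
    (((hF2.of_le (by norm_num)).mul contDiff_const).add (hF'.mul contDiff_const)).mul he_smooth
  have hG_compact : HasCompactSupport G :=
    ((hcompact.mul_right).add (hcompact.deriv.mul_right)).mul_right
  have hG_deriv : ∀ t, deriv G t = F t * e t + deriv (deriv F) t * ((l : ℂ)⁻¹) ^ 2 * e t := by
    intro t
    have h0 := (hF2.differentiable (by norm_num) t).hasDerivAt
    have h1 := (hF'.differentiable (by norm_num) t).hasDerivAt
    have hGt : HasDerivAt G ((deriv F t * (Complex.I * l)⁻¹ +
        deriv (deriv F) t * ((l : ℂ)⁻¹) ^ 2) * e t +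
        (F t * (Complex.I * l)⁻¹ + deriv F t * ((l : ℂ)⁻¹) ^ 2) * (Complex.I * l * e t)) t :=
      ((h0.mul_const _).add (h1.mul_const _)).mul (he_deriv t)
    rw [hGt.deriv]
    field_simp
    linear_combination (deriv F t * e t * l) * Complex.I_sq
  have hFe : Integrable fun t => F t * e t :=
    (hF2.continuous.mul he_smooth.continuous).integrable_of_hasCompactSupport hcompact.mul_right
  have hF''e : Integrable fun t => deriv (deriv F) t * ((l : ℂ)⁻¹) ^ 2 * e t :=
    (((hF'.continuous_deriv le_rfl).mul continuous_const).mul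
      he_smooth.continuous).integrable_of_hasCompactSupport hcompact.deriv.deriv.mul_right.mul_right
  have hsplit : ∫ t in Set.Ioi (0:ℝ), F t * e t = (∫ t in Set.Ioc 0 a, F t * e t) +
      (-G a - ∫ t in Set.Ioi a, deriv (deriv F) t * ((l : ℂ)⁻¹) ^ 2 * e t) := by
    have hparts := HasCompactSupport.integral_Ioi_deriv_eq hG_smooth hG_compact a
    simp_rw [hG_deriv] at hparts
    rw [integral_add hFe.integrableOn hF''e.integrableOn] at hparts
    rw [← Set.Ioc_union_Ioi_eq_Ioi ha.le, setIntegral_union (Set.Ioc_disjoint_Ioi le_rfl)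
      measurableSet_Ioi hFe.integrableOn hFe.integrableOn]
    linear_combination hparts
  have hl_enorm : ‖(l : ℂ)⁻¹‖ₑ = ENNReal.ofReal |l|⁻¹ := by
    rw [← ofReal_norm, norm_inv, Complex.norm_real, Real.norm_eq_abs]
  have hnear : ‖∫ t in Set.Ioc 0 a, F t * e t‖ₑ ≤ ∫⁻ t in Set.Ioc 0 a, ‖F t‖ₑ :=
    (enorm_integral_le_lintegral_enorm _).trans_eq (by simp_rw [enorm_mul, he_norm, mul_one])
  have hpow : ENNReal.ofReal (|l|⁻¹ ^ 2) = ENNReal.ofReal |l|⁻¹ ^ 2 :=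
    ENNReal.ofReal_pow (by positivity) 2
  have hfar : ‖∫ t in Set.Ioi a, deriv (deriv F) t * ((l : ℂ)⁻¹) ^ 2 * e t‖ₑ ≤
      ENNReal.ofReal (|l|⁻¹ ^ 2) * ∫⁻ t in Set.Ioi a, ‖deriv (deriv F) t‖ₑ := by
    refine (enorm_integral_le_lintegral_enorm _).trans_eq ?_
    simp_rw [enorm_mul, he_norm, mul_one, enorm_pow, hl_enorm, hpow]
    rw [lintegral_mul_const' _ _ (by finiteness), mul_comm]
  have hboundary : ‖-G a‖ₑ ≤ ‖F a‖ₑ * ENNReal.ofReal |l|⁻¹ +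
      ‖deriv F a‖ₑ * ENNReal.ofReal (|l|⁻¹ ^ 2) := by
    rw [enorm_neg, hG, enorm_mul, he_norm, mul_one]
    refine (enorm_add_le _ _).trans_eq ?_
    rw [enorm_mul, enorm_mul, enorm_pow, mul_inv, enorm_mul, hl_enorm, hpow, Complex.inv_I,
      enorm_neg, ← ofReal_norm Complex.I, Complex.norm_I, ENNReal.ofReal_one, one_mul]
  rw [hsplit]
  calc _ ≤ _ := (enorm_add_le _ _).trans (add_le_add hnear
        ((enorm_sub_le).trans (add_le_add hboundary hfar)))
    _ = _ := by ring

lemma enorm_fourier_le_fourierMajorant {F : ℝ → ℂ} (hF : IsTestFun F) {κ M : ℝ}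
    (hM : ∀ n < 3, ∀ t : ℝ, 0 < t →
      ‖iteratedDeriv n F t‖ₑ ≤ ENNReal.ofReal M * (logWeight κ t * ENNReal.ofReal (t⁻¹ ^ n)))
    {l : ℝ} (hl : l ≠ 0) :
    ‖∫ t in Set.Ioi (0:ℝ), F t * Complex.exp (Complex.I * l * t)‖ₑ ≤
      ENNReal.ofReal M * fourierMajorant κ |l| := by
  have hs : 0 < |l| := abs_pos.2 hl
  have hw := measurable_logWeight κ
  have h0 : ∀ t : ℝ, 0 < t → ‖iteratedDeriv 0 F t‖ₑ ≤ ENNReal.ofReal M * logWeight κ t := by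
    simpa using hM 0 (by norm_num)
  refine (hF.enorm_fourier_le hl (inv_pos.2 hs)).trans ?_
  have hvalue := h0 _ (inv_pos.2 hs)
  have hderiv := hM 1 (by norm_num) _ (inv_pos.2 hs)
  rw [logWeight_inv] at hvalue hderiv
  rw [inv_inv, pow_one] at hderiv
  have hnear : ∫⁻ t in Set.Ioc 0 |l|⁻¹, ‖iteratedDeriv 0 F t‖ₑ ≤
      ENNReal.ofReal M * ∫⁻ t in Set.Ioc 0 |l|⁻¹, logWeight κ t := by
    rw [← lintegral_const_mul _ hw]
    exact setLIntegral_mono' measurableSet_Ioc fun t ht => h0 t ht.1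
  have hfar : ∫⁻ t in Set.Ioi |l|⁻¹, ‖iteratedDeriv 2 F t‖ₑ ≤ ENNReal.ofReal M *
      ∫⁻ t in Set.Ioi |l|⁻¹, logWeight κ t * ENNReal.ofReal (t⁻¹ ^ 2) := by
    rw [← lintegral_const_mul _ (by fun_prop)]
    exact setLIntegral_mono' measurableSet_Ioi fun t ht =>
      hM 2 (by norm_num) t ((inv_pos.2 hs).trans ht)
  have hcancel : ENNReal.ofReal |l| * ENNReal.ofReal (|l|⁻¹ ^ 2) = ENNReal.ofReal |l|⁻¹ := by
    rw [← ENNReal.ofReal_mul hs.le]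
    congr 1
    field_simp
  calc _ ≤ ENNReal.ofReal M * logWeight κ |l| * ENNReal.ofReal |l|⁻¹ +
        ENNReal.ofReal M * (logWeight κ |l| * ENNReal.ofReal |l|) * ENNReal.ofReal (|l|⁻¹ ^ 2) +
        (ENNReal.ofReal M * ∫⁻ t in Set.Ioc 0 |l|⁻¹, logWeight κ t) +
        ENNReal.ofReal (|l|⁻¹ ^ 2) * (ENNReal.ofReal M *
          ∫⁻ t in Set.Ioi |l|⁻¹, logWeight κ t * ENNReal.ofReal (t⁻¹ ^ 2)) := by gcongr
    _ = ENNReal.ofReal M * fourierMajorant κ |l| := by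
      rw [fourierMajorant, mul_assoc (ENNReal.ofReal M) (_ * _), mul_assoc (logWeight κ |l|),
        hcancel]
      ring

/-- `L¹` bound on the inverse Fourier transform `(Φ* F)(λ) = (2π)^{-1/2}∫₀^∞ F(t)e^{iλt}dt`
of a test function `F` supported in `(0,∞)`, in terms of weighted sup-norms of `F`, `F'`,
`F''`. -/
theorem fourier_L1_bound (κ : ℝ) (hκ : 2 < κ) :
    ∃ C : ℝ, ∀ F : ℝ → ℂ, IsTestFun F →
      ∫⁻ l : ℝ, ‖(Real.sqrt (2 * Real.pi) : ℂ)⁻¹ *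
          ∫ t in Set.Ioi (0:ℝ), F t * Complex.exp (Complex.I * l * t)‖₊ ≤
        ENNReal.ofReal (C * ∑ n ∈ Finset.range 3,
          ⨆ t : Set.Ioi (0:ℝ),
            (1 + |Real.log (t : ℝ)|) ^ κ * (t : ℝ) ^ n * ‖iteratedDeriv n F (t : ℝ)‖) := by
  have hJ : logWeightIntegral κ ≠ ⊤ := (logWeightIntegral_lt_top (by linarith)).ne
  refine ⟨8 * (logWeightIntegral κ).toReal, fun F hF => ?_⟩
  set S : ℕ → ℝ := fun n => ⨆ t : Set.Ioi (0:ℝ),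
    (1 + |Real.log (t : ℝ)|) ^ κ * (t : ℝ) ^ n * ‖iteratedDeriv n F (t : ℝ)‖
  change _ ≤ ENNReal.ofReal (8 * (logWeightIntegral κ).toReal * ∑ n ∈ Finset.range 3, S n)
  set M : ℝ := ∑ n ∈ Finset.range 3, S n
  have hS_nonneg : ∀ n, 0 ≤ S n := fun n => Real.iSup_nonneg fun t => by
    have := t.2.out
    positivity
  have hM : ∀ n < 3, ∀ t : ℝ, 0 < t → ‖iteratedDeriv n F t‖ₑ ≤
      ENNReal.ofReal M * (logWeight κ t * ENNReal.ofReal (t⁻¹ ^ n)) := by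
    intro n hn t ht
    have hle : (1 + |Real.log t|) ^ κ * t ^ n * ‖iteratedDeriv n F t‖ ≤ M :=
      (le_ciSup (hF.bddAbove_range n) (⟨t, ht⟩ : Set.Ioi (0:ℝ))).trans
        (Finset.single_le_sum (fun i _ => hS_nonneg i) (Finset.mem_range.2 hn))
    have hL : 0 < 1 + |Real.log t| := by positivity
    rw [logWeight, ← ENNReal.ofReal_mul (by positivity),
      ← ENNReal.ofReal_mul (Finset.sum_nonneg fun i _ => hS_nonneg i), ← ofReal_norm]
    refine ENNReal.ofReal_le_ofReal ?_
    rw [Real.rpow_neg hL.le, inv_pow, ← mul_inv, ← div_eq_mul_inv, le_div_iff₀ (by positivity)]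
    linarith
  have hsqrt : ‖(Real.sqrt (2 * Real.pi) : ℂ)⁻¹‖ₑ ≤ 1 := by
    rw [← ofReal_norm, ENNReal.ofReal_le_one, norm_inv, Complex.norm_real, Real.norm_eq_abs,
      abs_of_nonneg (Real.sqrt_nonneg _)]
    refine inv_le_one_of_one_le₀ (Real.one_le_sqrt.2 ?_)
    linarith [Real.pi_gt_three]
  have hae : ∀ᵐ l : ℝ, ‖(Real.sqrt (2 * Real.pi) : ℂ)⁻¹ *
      ∫ t in Set.Ioi (0:ℝ), F t * Complex.exp (Complex.I * l * t)‖ₑ ≤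
        ENNReal.ofReal M * fourierMajorant κ |l| := by
    filter_upwards [compl_mem_ae_iff.2 (measure_singleton (0:ℝ))] with l hl
    rw [enorm_mul]
    exact (mul_le_mul' hsqrt (enorm_fourier_le_fourierMajorant hF hM hl)).trans_eq (one_mul _)
  calc _ ≤ ∫⁻ l : ℝ, ENNReal.ofReal M * fourierMajorant κ |l| := lintegral_mono_ae hae
    _ = ENNReal.ofReal M * ∫⁻ l : ℝ, fourierMajorant κ |l| :=
      lintegral_const_mul' _ _ ENNReal.ofReal_ne_top
    _ ≤ ENNReal.ofReal M * (2 * (4 * logWeightIntegral κ)) := by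
      gcongr
      exact (lintegral_comp_abs_le _).trans (by gcongr; exact lintegral_fourierMajorant κ)
    _ = ENNReal.ofReal (8 * (logWeightIntegral κ).toReal * M) := by
      rw [ENNReal.ofReal_mul (by positivity), ENNReal.ofReal_mul (by norm_num),
        ENNReal.ofReal_toReal hJ, ENNReal.ofReal_ofNat]
      ring
end
end

section
/- Let t₀ > 0, l ∈ ℕ, and λ ∈ ℝ with λ ≠ 0. Let f : [0, t₀] → ℂ be of class C^{l+1}. Then the following are equivalent: (i) ∫₀^{t₀ - t} (t₀ - t - s)^l f(s) ds = λ f(t) for all t ∈ (0, t₀); (ii) l! · f(t) = λ (-1)^{l+1} f^{(l+1)}(t₀ - t) for all t ∈ (0, t₀), and f(t₀) = f'(t₀) = ⋯ = f^{(l)}(t₀) = 0. -/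
open MeasureTheory intervalIntegral

noncomputable section

/-- Integration by parts raises the order of a power-kernel integral. -/
lemma integral_sub_pow_succ_mul {g : ℝ → ℂ} (hg : Continuous g) (n : ℕ) (x : ℝ) :
    ∫ s in (0:ℝ)..x, (((x - s) ^ (n + 1) : ℝ) : ℂ) * g s =
      ((n : ℂ) + 1) * ∫ s in (0:ℝ)..x, (((x - s) ^ n : ℝ) : ℂ) * ∫ r in (0:ℝ)..s, g r := by
  have hu : ∀ s ∈ Set.uIcc 0 x, HasDerivAt (fun s : ℝ => (((x - s) ^ (n + 1) : ℝ) : ℂ))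
      ((-((n + 1) * (x - s) ^ n) : ℝ) : ℂ) s := fun s _ => by
    refine HasDerivAt.ofReal_comp ?_
    simpa using ((hasDerivAt_id s).const_sub x).fun_pow (n + 1)
  have hv : ∀ s ∈ Set.uIcc 0 x, HasDerivAt (fun s : ℝ => ∫ r in (0:ℝ)..s, g r) (g s) s :=
    fun s _ => hg.integral_hasStrictDerivAt 0 s |>.hasDerivAt
  rw [integral_mul_deriv_eq_deriv_mul hu hv
    (Continuous.intervalIntegrable (by fun_prop) _ _) (hg.intervalIntegrable _ _),
    ← intervalIntegral.integral_const_mul]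
  simp [← intervalIntegral.integral_neg, mul_assoc]

lemma hasDerivAt_integral_sub_pow_succ_mul {g : ℝ → ℂ} (hg : Continuous g) (n : ℕ) (x : ℝ) :
    HasDerivAt (fun x : ℝ => ∫ s in (0:ℝ)..x, (((x - s) ^ (n + 1) : ℝ) : ℂ) * g s)
      (((n : ℂ) + 1) * ∫ s in (0:ℝ)..x, (((x - s) ^ n : ℝ) : ℂ) * g s) x := by
  induction n generalizing g with
  | zero =>
    simp_rw [integral_sub_pow_succ_mul hg]
    have hG : Continuous fun s : ℝ => ∫ r in (0:ℝ)..s, g r := by fun_prop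
    simpa using (hG.integral_hasStrictDerivAt 0 x).hasDerivAt
  | succ n ih =>
    have hG : Continuous fun s : ℝ => ∫ r in (0:ℝ)..s, g r := by fun_prop
    simp_rw [integral_sub_pow_succ_mul hg]
    exact_mod_cast (ih hG).const_mul (((n + 1 : ℕ) : ℂ) + 1)

lemma eqOn_Icc_iff_of_hasDerivWithinAt {E : Type*} [NormedAddCommGroup E] [NormedSpace ℝ E]
    {a b : ℝ} (hab : a < b) {F f F' : ℝ → E}
    (hF : ∀ t ∈ Set.Icc a b, HasDerivWithinAt F (F' t) (Set.Icc a b) t)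
    (hf : DifferentiableOn ℝ f (Set.Icc a b)) :
    Set.EqOn F f (Set.Icc a b) ↔
      Set.EqOn F' (derivWithin f (Set.Icc a b)) (Set.Icc a b) ∧ F b = f b := by
  have hU := uniqueDiffOn_Icc hab
  refine ⟨fun h => ⟨fun t ht => ?_, h ⟨hab.le, le_rfl⟩⟩, fun ⟨h, hb⟩ => ?_⟩
  · rw [← (hF t ht).derivWithin (hU t ht)]
    exact derivWithin_congr h (h ht)
  · have hd : ∀ t ∈ Set.Icc a b, HasDerivWithinAt (fun t => F t - f t) 0 (Set.Icc a b) t :=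
      fun t ht => by simpa [h ht] using (hF t ht).fun_sub (hf t ht).hasDerivWithinAt
    have hconst := constant_of_derivWithin_zero (fun t ht => (hd t ht).differentiableWithinAt)
      fun t ht => (hd t (Set.Ico_subset_Icc_self ht)).derivWithin
        (hU t (Set.Ico_subset_Icc_self ht))
    intro t ht
    have := (hconst t ht).trans (hconst b ⟨hab.le, le_rfl⟩).symm
    simpa [hb, sub_eq_zero] using this

lemma integral_sub_pow_mul_eqOn_iff {t₀ : ℝ} (ht₀ : 0 < t₀) (l : ℕ) (c : ℂ)
    {g f : ℝ → ℂ} (hg : Continuous g) (hf : ContDiffOn ℝ (l + 1) f (Set.Icc 0 t₀)) (hc : c ≠ 0) :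
    (∀ t ∈ Set.Icc 0 t₀, ∫ s in (0:ℝ)..(t₀ - t), (((t₀ - t - s) ^ l : ℝ) : ℂ) * g s = c * f t) ↔
      (∀ t ∈ Set.Icc 0 t₀, (l.factorial : ℂ) * g (t₀ - t) =
        c * (-1 : ℂ) ^ (l + 1) * iteratedDerivWithin (l + 1) f (Set.Icc 0 t₀) t) ∧
      ∀ k ≤ l, iteratedDerivWithin k f (Set.Icc 0 t₀) t₀ = 0 := by
  have hU := uniqueDiffOn_Icc ht₀
  induction l generalizing f c with
  | zero =>
    have hfd : DifferentiableOn ℝ f (Set.Icc 0 t₀) := hf.differentiableOn (by simp)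
    have key := eqOn_Icc_iff_of_hasDerivWithinAt ht₀
      (F := fun t => ∫ s in (0:ℝ)..(t₀ - t), g s) (F' := fun t => -g (t₀ - t))
      (f := fun t => c * f t)
      (fun t _ => ((hg.integral_hasStrictDerivAt 0 (t₀ - t)).hasDerivAt.comp_const_sub
        t₀ t).hasDerivWithinAt)
      (hfd.const_mul c)
    simp only [Set.EqOn, sub_self, integral_same] at key
    simp only [pow_zero, Complex.ofReal_one, one_mul, key, Nat.factorial_zero, Nat.cast_one,
      zero_add, pow_one, nonpos_iff_eq_zero, forall_eq, iteratedDerivWithin_zero]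
    refine and_congr (forall₂_congr fun t ht => ?_) (by simp [hc, eq_comm])
    rw [iteratedDerivWithin_one, derivWithin_const_mul _ (hfd t ht)]
    constructor <;> intro h <;> linear_combination -h
  | succ l ih =>
    have hfd : DifferentiableOn ℝ f (Set.Icc 0 t₀) := hf.differentiableOn (by simp)
    have hl : (l : ℂ) + 1 ≠ 0 := by exact_mod_cast l.succ_ne_zero
    have hf' : ContDiffOn ℝ (l + 1) (derivWithin f (Set.Icc 0 t₀)) (Set.Icc 0 t₀) :=
      hf.derivWithin hU (by norm_cast)
    have key := eqOn_Icc_iff_of_hasDerivWithinAt ht₀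
      (F := fun t => ∫ s in (0:ℝ)..(t₀ - t), (((t₀ - t - s) ^ (l + 1) : ℝ) : ℂ) * g s)
      (F' := fun t => -(((l : ℂ) + 1) *
        ∫ s in (0:ℝ)..(t₀ - t), (((t₀ - t - s) ^ l : ℝ) : ℂ) * g s))
      (f := fun t => c * f t)
      (fun t _ => ((hasDerivAt_integral_sub_pow_succ_mul hg l (t₀ - t)).comp_const_sub
        t₀ t).hasDerivWithinAt)
      (hfd.const_mul c)
    have ih' := ih (-c / (l + 1)) hf' (div_ne_zero (neg_ne_zero.2 hc) hl)
    simp only [Set.EqOn, sub_self, integral_same] at key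
    rw [key]
    have hstep : (∀ ⦃t⦄, t ∈ Set.Icc 0 t₀ → -(((l : ℂ) + 1) *
        ∫ s in (0:ℝ)..(t₀ - t), (((t₀ - t - s) ^ l : ℝ) : ℂ) * g s) =
          derivWithin (fun t => c * f t) (Set.Icc 0 t₀) t) ↔
        ∀ t ∈ Set.Icc 0 t₀, ∫ s in (0:ℝ)..(t₀ - t), (((t₀ - t - s) ^ l : ℝ) : ℂ) * g s =
          -c / (l + 1) * derivWithin f (Set.Icc 0 t₀) t := by
      refine forall₂_congr fun t ht => ?_
      rw [derivWithin_const_mul _ (hfd t ht), div_mul_eq_mul_div, eq_div_iff hl]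
      constructor <;> intro h <;> linear_combination -h
    refine (and_congr_left' (hstep.trans ih')).trans (and_assoc.trans ?_)
    refine and_congr (forall₂_congr fun t ht => ?_) ?_
    · rw [iteratedDerivWithin_succ' (n := l + 1), Nat.factorial_succ, div_mul_eq_mul_div,
        div_mul_eq_mul_div, eq_div_iff hl]
      push_cast
      constructor <;> intro h <;> linear_combination h
    · simp only [← iteratedDerivWithin_succ']
      constructor
      · rintro ⟨h, h0⟩ (_ | k) hk
        · simpa [hc, eq_comm] using h0
        · exact h k (by omega)
      · exact fun h => ⟨fun k hk => h (k + 1) (by omega), by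
          simpa [hc, eq_comm] using h 0 (by omega)⟩

lemma forall_Ioo_eq_iff_forall_Icc_eq {a b : ℝ} (hab : a < b) {u v : ℝ → ℂ}
    (hu : ContinuousOn u (Set.Icc a b)) (hv : ContinuousOn v (Set.Icc a b)) :
    (∀ t ∈ Set.Ioo a b, u t = v t) ↔ ∀ t ∈ Set.Icc a b, u t = v t :=
  ⟨fun h => Set.EqOn.of_subset_closure h hu hv Set.Ioo_subset_Icc_self (closure_Ioo hab.ne).ge,
    fun h t ht => h t (Set.Ioo_subset_Icc_self ht)⟩

/-- Equivalence of the eigenvalue equation for the Hankel operator with kernel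
`(t₀ - t)^l` on `(0,t₀)` with a boundary-value problem for the differential equation
`l! f(t) = λ(-1)^{l+1} f^{(l+1)}(t₀ - t)`. -/
theorem hankel_power_kernel_eigenvalue_equation (t₀ : ℝ) (ht₀ : 0 < t₀)
    (l : ℕ) (lam : ℝ) (hlam : lam ≠ 0) (f : ℝ → ℂ)
    (hf : ContDiffOn ℝ (l + 1) f (Set.Icc 0 t₀)) :
    ((∀ t ∈ Set.Ioo (0:ℝ) t₀,
        ∫ s in (0:ℝ)..(t₀ - t), (((t₀ - t - s) ^ l : ℝ) : ℂ) * f s = (lam : ℂ) * f t) ↔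
      ((∀ t ∈ Set.Ioo (0:ℝ) t₀,
          ((l.factorial : ℕ) : ℂ) * f t =
            (lam : ℂ) * (-1 : ℂ) ^ (l + 1) *
              iteratedDerivWithin (l + 1) f (Set.Icc 0 t₀) (t₀ - t)) ∧
        (∀ k ≤ l, iteratedDerivWithin k f (Set.Icc 0 t₀) t₀ = 0))) := by
  have hU := uniqueDiffOn_Icc ht₀
  have hfc := hf.continuousOn
  set g : ℝ → ℂ := Set.IccExtend ht₀.le ((Set.Icc 0 t₀).domRestrict f) with hgdef
  have hg : Continuous g := hfc.domRestrict.Icc_extend'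
  have hgf : ∀ s ∈ Set.Icc 0 t₀, g s = f s := fun s hs => by
    rw [hgdef, Set.IccExtend_of_mem _ _ hs]; rfl
  have hreflect : ∀ t, t ∈ Set.Ioo 0 t₀ → t₀ - t ∈ Set.Ioo 0 t₀ := fun t ht =>
    ⟨by linarith [ht.2], by linarith [ht.1]⟩
  have hcont : Continuous fun t : ℝ =>
      ∫ s in (0:ℝ)..(t₀ - t), (((t₀ - t - s) ^ l : ℝ) : ℂ) * g s := by
    fun_prop
  have hint : (∀ t ∈ Set.Ioo (0:ℝ) t₀,
      ∫ s in (0:ℝ)..(t₀ - t), (((t₀ - t - s) ^ l : ℝ) : ℂ) * f s = (lam : ℂ) * f t) ↔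
      ∀ t ∈ Set.Ioo (0:ℝ) t₀,
        ∫ s in (0:ℝ)..(t₀ - t), (((t₀ - t - s) ^ l : ℝ) : ℂ) * g s = (lam : ℂ) * f t := by
    refine forall₂_congr fun t ht => ?_
    rw [integral_congr fun s hs => ?_]
    rw [Set.uIcc_of_le (by linarith [ht.2])] at hs
    simp only [hgf s ⟨hs.1, by linarith [hs.2, ht.1]⟩]
  have hode : (∀ t ∈ Set.Ioo (0:ℝ) t₀, ((l.factorial : ℕ) : ℂ) * f t =
      (lam : ℂ) * (-1 : ℂ) ^ (l + 1) *
        iteratedDerivWithin (l + 1) f (Set.Icc 0 t₀) (t₀ - t)) ↔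
      ∀ t ∈ Set.Ioo (0:ℝ) t₀, (l.factorial : ℂ) * g (t₀ - t) =
        (lam : ℂ) * (-1 : ℂ) ^ (l + 1) * iteratedDerivWithin (l + 1) f (Set.Icc 0 t₀) t := by
    constructor <;> intro h t ht
    · have := h _ (hreflect t ht)
      rwa [sub_sub_cancel, ← hgf _ (Set.Ioo_subset_Icc_self (hreflect t ht))] at this
    · have := h _ (hreflect t ht)
      rwa [sub_sub_cancel, hgf _ (Set.Ioo_subset_Icc_self ht)] at this
  rw [hint, hode,
    forall_Ioo_eq_iff_forall_Icc_eq ht₀ hcont.continuousOn (hfc.const_mul _),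
    forall_Ioo_eq_iff_forall_Icc_eq ht₀ (Continuous.continuousOn (by fun_prop))
      ((hf.continuousOn_iteratedDerivWithin (by norm_cast) hU).const_mul _)]
  exact integral_sub_pow_mul_eqOn_iff ht₀ l lam hg hf (by exact_mod_cast hlam)
end
end

section
/- Let t₀ > 0 and let H be the bounded self-adjoint operator on L²((0,∞)) given by (H f)(t) = ∫₀^{max(t₀ - t, 0)} f(s) ds (the Hankel operator with kernel h(t) = 1 for t ≤ t₀ and h(t) = 0 for t > t₀). Then the set of nonzero eigenvalues of H is exactly { t₀ / (2π(n - 3/4)) : n = 1, 2, … } ∪ { - t₀ / (2π(n - 1/4)) : n = 1, 2, … }; that is, a real number λ ≠ 0 admits a nonzero f ∈ L²((0,∞)) with H f = λ f if and only if λ = t₀/(2π(n - 3/4)) or λ = -t₀/(2π(n - 1/4)) for some positive integer n. -/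
open MeasureTheory

noncomputable section

/-- A solution of `dP/dt = a P(t₀ - t)`, `P 0 = 0` on `[0, t₀]` vanishes unless `sin (a t₀) = 1`. -/
theorem eq_zero_or_sin_eq_one_of_reflected_deriv {t₀ a : ℝ} (ht₀ : 0 < t₀) {P : ℝ → ℂ}
    (hP : ∀ t ∈ Set.Icc 0 t₀, HasDerivAt P (a * P (t₀ - t)) t) (hP0 : P 0 = 0) :
    (∀ t ∈ Set.Icc 0 t₀, P t = 0) ∨ Real.sin (a * t₀) = 1 := by
  have hmem : ∀ t ∈ Set.Icc 0 t₀, t₀ - t ∈ Set.Icc 0 t₀ := fun t ht =>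
    ⟨by linarith [ht.2], by linarith [ht.1]⟩
  have hQ : ∀ t ∈ Set.Icc 0 t₀, HasDerivAt (fun t => P (t₀ - t)) (-(a * P t)) t := by
    intro t ht
    have h := (hP _ (hmem t ht)).scomp t ((hasDerivAt_id t).const_sub t₀)
    simpa [Function.comp_def] using h
  have hcos : ∀ t : ℝ, HasDerivAt (fun t : ℝ => ((Real.cos (a * t) : ℝ) : ℂ))
      ((-Real.sin (a * t) * a : ℝ) : ℂ) t := fun t => by
    simpa using (((hasDerivAt_id t).const_mul a).cos).ofReal_comp
  have hsin : ∀ t : ℝ, HasDerivAt (fun t : ℝ => ((Real.sin (a * t) : ℝ) : ℂ))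
      ((Real.cos (a * t) * a : ℝ) : ℂ) t := fun t => by
    simpa using (((hasDerivAt_id t).const_mul a).sin).ofReal_comp
  have key : ∀ F : ℝ → ℂ, (∀ t ∈ Set.Icc 0 t₀, HasDerivAt F 0 t) →
      ∀ t ∈ Set.Icc 0 t₀, F t = F 0 := fun F hF =>
    constant_of_has_deriv_right_zero (fun t ht => (hF t ht).continuousAt.continuousWithinAt)
      fun t ht => (hF t (Set.Ico_subset_Icc_self ht)).hasDerivWithinAt
  have h1 := key (fun t => P (t₀ - t) * (Real.cos (a * t) : ℝ) + P t * (Real.sin (a * t) : ℝ))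
    fun t ht => by
      refine (((hQ t ht).mul (hcos t)).add ((hP t ht).mul (hsin t))).congr_deriv ?_
      push_cast
      ring
  have h2 := key (fun t => P t * (Real.cos (a * t) : ℝ) - P (t₀ - t) * (Real.sin (a * t) : ℝ))
    fun t ht => by
      refine (((hP t ht).mul (hcos t)).sub ((hQ t ht).mul (hsin t))).congr_deriv ?_
      push_cast
      ring
  simp only [mul_zero, Real.cos_zero, Real.sin_zero, sub_zero, hP0, Complex.ofReal_one,
    Complex.ofReal_zero, mul_one, add_zero] at h1 h2
  by_cases h0 : P t₀ = 0
  · left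
    intro t ht
    have e1 := h1 t ht
    have e2 := h2 t ht
    have e3 : ((Real.sin (a * t) : ℝ) : ℂ) ^ 2 + ((Real.cos (a * t) : ℝ) : ℂ) ^ 2 = 1 := by
      exact_mod_cast Real.sin_sq_add_cos_sq (a * t)
    rw [h0] at e1
    linear_combination ((Real.sin (a * t) : ℝ) : ℂ) * e1 + ((Real.cos (a * t) : ℝ) : ℂ) * e2
      - P t * e3
  · right
    have e1 := h1 t₀ (Set.right_mem_Icc.2 ht₀.le)
    rw [sub_self, hP0, zero_mul, zero_add] at e1
    exact_mod_cast mul_left_cancel₀ h0 (e1.trans (mul_one _).symm)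

/-- If `f` is integrable on `(0, t₀)` and `f = a ∫₀^{t₀ - ·} f` almost everywhere there, then
`f` vanishes almost everywhere on `(0, t₀)` unless `sin (a t₀) = 1`. -/
theorem ae_eq_zero_or_sin_eq_one_of_reflected_integral {t₀ a : ℝ} (ht₀ : 0 < t₀) {f : ℝ → ℂ}
    (hf : IntegrableOn f (Set.Ioo 0 t₀))
    (h : ∀ᵐ t, t ∈ Set.Ioo 0 t₀ → f t = a * ∫ s in (0 : ℝ)..(t₀ - t), f s) :
    (∀ᵐ t, t ∈ Set.Ioo 0 t₀ → f t = 0) ∨ Real.sin (a * t₀) = 1 := by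
  set f₀ : ℝ → ℂ := (Set.Ioo 0 t₀).indicator f with hf₀
  have hint : Integrable f₀ := (integrable_indicator_iff measurableSet_Ioo).2 hf
  set K : ℝ → ℂ := fun t => ∫ s in (0 : ℝ)..t, f₀ s with hK
  have hKc : Continuous K := intervalIntegral.continuous_primitive
    (fun _ _ => hint.intervalIntegrable) 0
  have hKf : ∀ t ∈ Set.Icc 0 t₀, ∫ s in (0 : ℝ)..t, f s = K t := by
    intro t ht
    rw [hK]
    simp only [intervalIntegral.integral_of_le ht.1, integral_Ioc_eq_integral_Ioo]
    refine setIntegral_congr_fun measurableSet_Ioo fun s hs => ?_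
    exact (Set.indicator_of_mem (show s ∈ Set.Ioo 0 t₀ from ⟨hs.1, hs.2.trans_le ht.2⟩) f).symm
  have hfK : ∀ᵐ t, t ∈ Set.Ioo 0 t₀ → f t = a * K (t₀ - t) := by
    filter_upwards [h] with t ht hmem
    rw [ht hmem, hKf _ ⟨by linarith [hmem.2], by linarith [hmem.1]⟩]
  set P : ℝ → ℂ := fun t => ∫ s in (0 : ℝ)..t, a * K (t₀ - s) with hP
  have hPK : ∀ t ∈ Set.Icc 0 t₀, P t = K t := by
    intro t ht
    rw [← hKf t ht, hP]
    simp only [intervalIntegral.integral_of_le ht.1, integral_Ioc_eq_integral_Ioo]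
    refine setIntegral_congr_ae measurableSet_Ioo ?_
    filter_upwards [hfK] with s hs hmem
    exact (hs ⟨hmem.1, hmem.2.trans_le ht.2⟩).symm
  have hPd : ∀ t ∈ Set.Icc 0 t₀, HasDerivAt P (a * P (t₀ - t)) t := by
    intro t ht
    rw [hPK (t₀ - t) ⟨by linarith [ht.2], by linarith [ht.1]⟩]
    have hc : Continuous fun s => (a : ℂ) * K (t₀ - s) := by fun_prop
    exact hc.integral_hasStrictDerivAt 0 t |>.hasDerivAt
  refine (eq_zero_or_sin_eq_one_of_reflected_deriv ht₀ hPd (by simp [hP])).imp_left fun hz => ?_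
  filter_upwards [hfK] with t ht hmem
  have hr : t₀ - t ∈ Set.Icc 0 t₀ := ⟨by linarith [hmem.2], by linarith [hmem.1]⟩
  rw [ht hmem, ← hPK _ hr, hz _ hr, mul_zero]

/-- The listed values are the solutions of `sin (t₀ / λ) = 1`. -/
theorem sin_inv_mul_eq_one_iff {t₀ lam : ℝ} (ht₀ : 0 < t₀) (hlam : lam ≠ 0) :
    Real.sin (lam⁻¹ * t₀) = 1 ↔
      ∃ n : ℕ, 1 ≤ n ∧
        (lam = t₀ / (2 * Real.pi * ((n : ℝ) - 3/4)) ∨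
         lam = -(t₀ / (2 * Real.pi * ((n : ℝ) - 1/4)))) := by
  have hpi := Real.pi_pos
  rw [Real.sin_eq_one_iff]
  constructor
  · rintro ⟨k, hk⟩
    have hk' : t₀ = lam * (Real.pi / 2 + k * (2 * Real.pi)) := by
      rw [hk]; field_simp
    rcases le_or_gt 0 k with h0 | h0
    · lift k to ℕ using h0
      refine ⟨k + 1, by omega, Or.inl ?_⟩
      have hk0 : (0 : ℝ) ≤ k := k.cast_nonneg
      push_cast at hk' ⊢
      rw [eq_div_iff (mul_pos (by positivity) (by linarith)).ne', hk']
      ring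
    · obtain ⟨n, rfl⟩ : ∃ n : ℕ, k = -(n : ℤ) := ⟨k.natAbs, by omega⟩
      have hn : 1 ≤ n := by omega
      refine ⟨n, hn, Or.inr ?_⟩
      have hn' : (1 : ℝ) ≤ n := by exact_mod_cast hn
      push_cast at hk'
      rw [← neg_div, eq_div_iff (mul_pos (by positivity) (by linarith)).ne', hk']
      ring
  · rintro ⟨n, hn, h | h⟩ <;> have hn' : (1 : ℝ) ≤ n := by exact_mod_cast hn
    · refine ⟨(n : ℤ) - 1, ?_⟩
      rw [h, inv_div, div_mul_cancel₀ _ ht₀.ne']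
      push_cast
      ring
    · refine ⟨-(n : ℤ), ?_⟩
      rw [h, inv_neg, inv_div, neg_mul, div_mul_cancel₀ _ ht₀.ne']
      push_cast
      ring

/-- When `sin (a t₀) = 1`, the function `cos (a ·)` truncated to `(0, t₀)` satisfies
`∫₀^{(t₀ - t)₊} f = a⁻¹ f(t)` for `t > 0`. -/
theorem integral_indicator_cos_of_sin_eq_one {t₀ a t : ℝ} (ha : a ≠ 0)
    (hs : Real.sin (a * t₀) = 1) (ht : 0 < t) :
    ∫ s in (0 : ℝ)..(max (t₀ - t) 0),
        (Set.Ioo 0 t₀).indicator (fun s => ((Real.cos (a * s) : ℝ) : ℂ)) s =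
      (a⁻¹ : ℝ) * (Set.Ioo 0 t₀).indicator (fun s => ((Real.cos (a * s) : ℝ) : ℂ)) t := by
  rcases le_or_gt t₀ t with h | h
  · rw [max_eq_right (by linarith), Set.indicator_of_notMem fun hm => by linarith [hm.2]]
    simp
  · have hr : 0 ≤ t₀ - t := by linarith
    have hc : Real.cos (a * t₀) = 0 := by
      have := Real.sin_sq_add_cos_sq (a * t₀)
      rw [hs] at this
      exact pow_eq_zero_iff two_ne_zero |>.1 (by linarith)
    rw [max_eq_left hr, Set.indicator_of_mem (show t ∈ Set.Ioo 0 t₀ from ⟨ht, h⟩)]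
    have hcongr : ∫ s in (0 : ℝ)..(t₀ - t),
        (Set.Ioo 0 t₀).indicator (fun s => ((Real.cos (a * s) : ℝ) : ℂ)) s =
        ∫ s in (0 : ℝ)..(t₀ - t), ((Real.cos (a * s) : ℝ) : ℂ) := by
      simp only [intervalIntegral.integral_of_le hr]
      exact setIntegral_congr_fun measurableSet_Ioc fun s hm =>
        Set.indicator_of_mem (show s ∈ Set.Ioo 0 t₀ from ⟨hm.1, by linarith [hm.2]⟩) _
    rw [hcongr, intervalIntegral.integral_ofReal,
      intervalIntegral.integral_comp_mul_left (fun x => Real.cos x) ha, integral_cos, mul_sub,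
      Real.sin_sub, hs, hc]
    simp




/-- The nonzero eigenvalues of the Hankel operator with kernel `1_{(0,t₀]}`, i.e.
`(Hf)(t) = ∫₀^{(t₀-t)₊} f(s) ds`, are exactly `t₀/(2π(n-3/4))` and `-t₀/(2π(n-1/4))`,
`n = 1, 2, …`. -/
theorem hankel_indicator_kernel_eigenvalues (t₀ : ℝ) (ht₀ : 0 < t₀)
    (H : Lp ℂ 2 (volume.restrict (Set.Ioi (0:ℝ))) →L[ℂ]
      Lp ℂ 2 (volume.restrict (Set.Ioi (0:ℝ))))
    (hH : ∀ f : Lp ℂ 2 (volume.restrict (Set.Ioi (0:ℝ))),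
      ∀ᵐ t ∂(volume.restrict (Set.Ioi (0:ℝ))),
        (H f : ℝ → ℂ) t = ∫ s in (0:ℝ)..(max (t₀ - t) 0), f s) :
    ∀ lam : ℝ, lam ≠ 0 →
      ((∃ f : Lp ℂ 2 (volume.restrict (Set.Ioi (0:ℝ))),
          f ≠ 0 ∧ H f = (lam : ℂ) • f) ↔
        ∃ n : ℕ, 1 ≤ n ∧
          (lam = t₀ / (2 * Real.pi * ((n : ℝ) - 3/4)) ∨
           lam = -(t₀ / (2 * Real.pi * ((n : ℝ) - 1/4))))) := by
  intro lam hlam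
  rw [← sin_inv_mul_eq_one_iff ht₀ hlam]
  constructor
  · rintro ⟨f, hf0, hf⟩
    have hfe : ∀ᵐ t, t ∈ Set.Ioi (0 : ℝ) →
        f t = (lam⁻¹ : ℝ) * ∫ s in (0 : ℝ)..(max (t₀ - t) 0), f s := by
      rw [← ae_restrict_iff' measurableSet_Ioi]
      have h := hH f
      rw [hf] at h
      filter_upwards [h, Lp.coeFn_smul (lam : ℂ) f] with t h1 h2
      rw [← h1, h2, Pi.smul_apply, smul_eq_mul, Complex.ofReal_inv,
        inv_mul_cancel_left₀ (Complex.ofReal_ne_zero.2 hlam)]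
    have hint : IntegrableOn f (Set.Ioo 0 t₀) := by
      have hm : MemLp f 2 (volume.restrict (Set.Ioo 0 t₀)) :=
        (Lp.memLp f).mono_measure (Measure.restrict_mono Set.Ioo_subset_Ioi_self le_rfl)
      exact hm.integrable one_le_two
    refine (ae_eq_zero_or_sin_eq_one_of_reflected_integral ht₀ hint ?_).resolve_left fun hz => ?_
    · filter_upwards [hfe] with t ht hmem
      rw [ht hmem.1, max_eq_left (by linarith [hmem.2])]
    · apply hf0
      rw [Lp.eq_zero_iff_ae_eq_zero, Filter.EventuallyEq, ae_restrict_iff' measurableSet_Ioi]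
      filter_upwards [hfe, hz] with t h1 h2 hmem
      rcases lt_or_ge t t₀ with h | h
      · exact h2 ⟨hmem, h⟩
      · rw [h1 hmem, max_eq_right (by linarith)]
        simp
  · intro hs
    set c : ℝ → ℂ := fun s => ((Real.cos (lam⁻¹ * s) : ℝ) : ℂ) with hc
    have hcc : Continuous c := by fun_prop
    have hmem : MemLp ((Set.Ioo 0 t₀).indicator c) 2 (volume.restrict (Set.Ioi (0 : ℝ))) := by
      rw [memLp_indicator_iff_restrict measurableSet_Ioo]
      have : IsFiniteMeasure ((volume.restrict (Set.Ioi (0 : ℝ))).restrict (Set.Ioo 0 t₀)) := by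
        rw [Measure.restrict_restrict_of_subset Set.Ioo_subset_Ioi_self]
        infer_instance
      refine MemLp.of_bound hcc.aestronglyMeasurable 1 (Filter.Eventually.of_forall fun s => ?_)
      rw [hc, Complex.norm_real]
      exact Real.abs_cos_le_one _
    have hcoe := hmem.coeFn_toLp
    refine ⟨hmem.toLp _, fun h0 => ?_, ?_⟩
    · rw [Lp.eq_zero_iff_ae_eq_zero] at h0
      have hz : c =ᵐ[volume.restrict (Set.Ioo 0 t₀)] fun _ => 0 := by
        have h := ae_restrict_of_ae_restrict_of_subset (s := Set.Ioo 0 t₀)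
          Set.Ioo_subset_Ioi_self (hcoe.symm.trans h0)
        filter_upwards [h, ae_restrict_mem measurableSet_Ioo] with s h1 h2
        rwa [Set.indicator_of_mem h2] at h1
      rw [restrict_Ioo_eq_restrict_Icc] at hz
      have h := Measure.eqOn_Icc_of_ae_eq volume ht₀.ne hz hcc.continuousOn continuousOn_const
        (Set.left_mem_Icc.2 ht₀.le)
      simp [hc] at h
    · refine Lp.ext ?_
      have hcoe' := (ae_restrict_iff' measurableSet_Ioi).1 hcoe
      filter_upwards [hH (hmem.toLp _), Lp.coeFn_smul (lam : ℂ) (hmem.toLp _), hcoe,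
        ae_restrict_mem measurableSet_Ioi] with t h1 h2 h3 ht
      rw [h1, h2, Pi.smul_apply, h3, smul_eq_mul]
      have h := integral_indicator_cos_of_sin_eq_one (inv_ne_zero hlam) hs ht
      rw [inv_inv] at h
      rw [← h]
      simp only [intervalIntegral.integral_of_le (le_max_right (t₀ - t) 0)]
      refine setIntegral_congr_ae measurableSet_Ioc ?_
      filter_upwards [hcoe'] with s hs' hm
      exact hs' hm.1
end
end

section
/- Let ν = 3 √(6/π) e^{-3/2}, let γ ∈ ℝ, and set h_γ(t) = t^{-1} - γ e^{-√t} for t > 0 (the Carleman kernel perturbed by -γ e^{-t^{1/2}}). If γ ≤ ν^{-1}, then Q_{h_γ}[f] ≥ 0 for all f ∈ C_c^∞((0,∞)). If γ > ν^{-1}, then N₋(Q_{h_γ}) = ∞, i.e. for every natural number N there is an N-dimensional complex subspace L ⊆ C_c^∞((0,∞)) with Q_{h_γ}[f] < 0 for every nonzero f ∈ L. -/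
open MeasureTheory
open scoped ComplexOrder

noncomputable section

/-- The Hankel quadratic form `Q_h[f] = ∫₀^∞∫₀^∞ h(t+s) f(s) conj(f(t)) ds dt`. -/
def hankelQF (h : ℝ → ℂ) (f : ℝ → ℂ) : ℂ :=
  ∫ t in Set.Ioi (0:ℝ), ∫ s in Set.Ioi (0:ℝ), h (t + s) * f s * (starRingEnd ℂ) (f t)

/-- There is an `N`-dimensional subspace of test functions on which `Q` is strictly negative. -/
def negSubspace (Q : (ℝ → ℂ) → ℂ) (N : ℕ) : Prop :=
  ∃ L : Submodule ℂ (ℝ → ℂ), (∀ f ∈ L, IsTestFun f) ∧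
    Module.finrank ℂ L = N ∧ ∀ f ∈ L, f ≠ 0 → Q f < 0

open Set in
theorem integral_exp_neg_sub_div_sq {b : ℝ} (hb : 0 < b) :
    ∫ u in Ioi (0 : ℝ), Real.exp (-(u - b / u) ^ 2) = √Real.pi / 2 := by
  have hderiv : ∀ u ∈ Ioi (0 : ℝ),
      HasDerivWithinAt (fun u => u - b / u) (1 + b / u ^ 2) (Ioi 0) u := by
    intro u hu
    have hu0 : u ≠ 0 := ne_of_gt hu
    have h := ((hasDerivAt_id u).sub ((hasDerivAt_inv hu0).const_mul b)).hasDerivWithinAt (s := Ioi 0)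
    refine h.congr_deriv ?_
    ring
  have hinj : InjOn (fun u : ℝ => u - b / u) (Ioi 0) := by
    apply StrictMonoOn.injOn
    intro u hu v hv huv
    have := div_lt_div_of_pos_left hb hu huv
    simp only
    linarith
  have himage : image (fun u : ℝ => u - b / u) (Ioi 0) = univ := by
    refine eq_univ_of_forall fun v => ?_
    have hs : √(v ^ 2 + 4 * b) ^ 2 = v ^ 2 + 4 * b := Real.sq_sqrt (by positivity)
    have hlt : |v| < √(v ^ 2 + 4 * b) := by
      rw [← Real.sqrt_sq_eq_abs]
      exact Real.sqrt_lt_sqrt (sq_nonneg v) (by linarith)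
    have hpos : 0 < (v + √(v ^ 2 + 4 * b)) / 2 := by
      have := neg_abs_le v
      linarith
    refine ⟨_, hpos, ?_⟩
    simp only
    have : v + √(v ^ 2 + 4 * b) ≠ 0 := by linarith
    field_simp
    nlinarith
  have hderiv' : ∀ u ∈ Ioi (0 : ℝ), HasDerivWithinAt (fun u => b / u) (-(b / u ^ 2)) (Ioi 0) u := by
    intro u hu
    have h := ((hasDerivAt_inv (ne_of_gt hu)).const_mul b).hasDerivWithinAt (s := Ioi 0)
    refine h.congr_deriv ?_
    ring
  have hinj' : InjOn (fun u : ℝ => b / u) (Ioi 0) := by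
    apply StrictAntiOn.injOn
    intro u hu v hv huv
    exact div_lt_div_of_pos_left hb hu huv
  have himage' : image (fun u : ℝ => b / u) (Ioi 0) = Ioi 0 := by
    ext v
    constructor
    · rintro ⟨u, hu, rfl⟩
      exact div_pos hb hu
    · intro hv
      exact ⟨b / v, div_pos hb hv, by simp only; field_simp⟩
  have hgauss : Integrable fun v : ℝ => Real.exp (-v ^ 2) := by
    simpa using integrable_exp_neg_mul_sq (one_pos)
  have hint := (integrableOn_image_iff_integrableOn_abs_deriv_smul measurableSet_Ioi hderiv hinj
    (fun v => Real.exp (-v ^ 2))).1 (himage ▸ hgauss.integrableOn)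
  have heq := integral_image_eq_integral_abs_deriv_smul measurableSet_Ioi hderiv hinj
    (fun v => Real.exp (-v ^ 2))
  have heq' := integral_image_eq_integral_abs_deriv_smul measurableSet_Ioi hderiv' hinj'
    (fun u => Real.exp (-(u - b / u) ^ 2))
  rw [himage'] at heq'
  rw [himage, setIntegral_univ] at heq
  have hg : ∫ v : ℝ, Real.exp (-v ^ 2) = √Real.pi := by simpa using integral_gaussian 1
  have hmeas : Measurable fun u : ℝ => Real.exp (-(u - b / u) ^ 2) := by fun_prop
  have hint₁ : IntegrableOn (fun u => Real.exp (-(u - b / u) ^ 2)) (Ioi 0) := by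
    refine Integrable.mono' hint hmeas.aestronglyMeasurable ?_
    filter_upwards [ae_restrict_mem measurableSet_Ioi] with u hu
    have hq : 0 < b / u ^ 2 := div_pos hb (pow_pos hu 2)
    rw [Real.norm_of_nonneg (Real.exp_nonneg _), smul_eq_mul, abs_of_pos (by linarith)]
    nlinarith [Real.exp_pos (-(u - b / u) ^ 2)]
  have hint₂ : IntegrableOn (fun u => b / u ^ 2 * Real.exp (-(u - b / u) ^ 2)) (Ioi 0) := by
    refine (hint.sub hint₁).congr ?_
    filter_upwards [ae_restrict_mem measurableSet_Ioi] with u hu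
    have hq : 0 < b / u ^ 2 := div_pos hb (pow_pos hu 2)
    simp only [Pi.sub_apply]
    rw [smul_eq_mul, abs_of_pos (by linarith)]
    ring
  have h₁ : ∫ u in Ioi (0 : ℝ), |1 + b / u ^ 2| • Real.exp (-(u - b / u) ^ 2) =
      (∫ u in Ioi (0 : ℝ), Real.exp (-(u - b / u) ^ 2)) +
        ∫ u in Ioi (0 : ℝ), b / u ^ 2 * Real.exp (-(u - b / u) ^ 2) := by
    rw [← integral_add hint₁ hint₂]
    refine setIntegral_congr_fun measurableSet_Ioi fun u hu => ?_
    have hq : 0 < b / u ^ 2 := div_pos hb (pow_pos hu 2)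
    rw [smul_eq_mul, abs_of_pos (by linarith)]
    ring
  have h₂ : ∫ u in Ioi (0 : ℝ), |-(b / u ^ 2)| • Real.exp (-(b / u - b / (b / u)) ^ 2) =
      ∫ u in Ioi (0 : ℝ), b / u ^ 2 * Real.exp (-(u - b / u) ^ 2) := by
    refine setIntegral_congr_fun measurableSet_Ioi fun u hu => ?_
    have hu0 : u ≠ 0 := ne_of_gt hu
    have hq : 0 < b / u ^ 2 := div_pos hb (pow_pos hu 2)
    have hbu : b / (b / u) = u := by field_simp
    rw [smul_eq_mul, abs_neg, abs_of_pos hq, hbu]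
    ring_nf
  rw [h₁, hg] at heq
  rw [h₂] at heq'
  linarith

/-- The density of the measure on `(0,∞)` whose Laplace transform is `t ↦ e^{-√t}`. -/
def expSqrtDensity (x : ℝ) : ℝ :=
  (2 * √Real.pi)⁻¹ * x ^ (-(3 / 2) : ℝ) * Real.exp (-(1 / (4 * x)))

open Set in
theorem integral_exp_mul_expSqrtDensity {t : ℝ} (ht : 0 < t) :
    ∫ x in Ioi (0 : ℝ), Real.exp (-(t * x)) * expSqrtDensity x = Real.exp (-√t) := by
  rw [← integral_comp_rpow_Ioi (fun x => Real.exp (-(t * x)) * expSqrtDensity x)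
    (p := -2) (by norm_num)]
  have hb : 0 < √t / 2 := by positivity
  have hcomp := integral_comp_mul_left_Ioi
    (fun u => Real.exp (-(u - √t / 2 / u) ^ 2)) 0 (b := 1 / 2) (by norm_num)
  rw [mul_zero, integral_exp_neg_sub_div_sq hb] at hcomp
  have hpi : √Real.pi ≠ 0 := by positivity
  have heq : ∀ x ∈ Ioi (0 : ℝ),
      (|(-2 : ℝ)| * x ^ ((-2 : ℝ) - 1)) •
        (Real.exp (-(t * x ^ (-2 : ℝ))) * expSqrtDensity (x ^ (-2 : ℝ))) =
      ((√Real.pi)⁻¹ * Real.exp (-√t)) *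
        Real.exp (-(1 / 2 * x - √t / 2 / (1 / 2 * x)) ^ 2) := by
    intro x hx
    have hx0 : (0 : ℝ) < x := hx
    have h3 : (x ^ (-2 : ℝ)) ^ (-(3 / 2) : ℝ) = x ^ (3 : ℝ) := by
      rw [← Real.rpow_mul hx0.le]; norm_num
    have h4 : x ^ ((-2 : ℝ) - 1) = (x ^ (3 : ℝ))⁻¹ := by
      rw [← Real.rpow_neg hx0.le]; norm_num
    have h2 : x ^ (-2 : ℝ) = (x ^ 2)⁻¹ := by
      rw [Real.rpow_neg hx0.le]; norm_num
    have hexp : Real.exp (-(t * (x ^ 2)⁻¹)) * Real.exp (-(1 / (4 * (x ^ 2)⁻¹))) =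
        Real.exp (-√t) * Real.exp (-(1 / 2 * x - √t / 2 / (1 / 2 * x)) ^ 2) := by
      rw [← Real.exp_add, ← Real.exp_add]
      congr 1
      have hs : √t ^ 2 = t := Real.sq_sqrt ht.le
      field_simp
      nlinarith
    have hx3 : x ^ (3 : ℝ) ≠ 0 := by positivity
    rw [expSqrtDensity, h3, h4, h2, smul_eq_mul, mul_assoc (√Real.pi)⁻¹, ← hexp]
    rw [show |(-2 : ℝ)| = 2 by norm_num]
    field_simp
  rw [setIntegral_congr_fun measurableSet_Ioi heq, integral_const_mul, hcomp]
  simp only [smul_eq_mul]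
  field_simp

theorem expSqrtDensity_nonneg {x : ℝ} (hx : 0 < x) : 0 ≤ expSqrtDensity x := by
  unfold expSqrtDensity
  positivity

theorem expSqrtDensity_one_sixth :
    expSqrtDensity (1 / 6) = 3 * √(6 / Real.pi) * Real.exp (-(3 / 2)) := by
  have h : ((1 : ℝ) / 6) ^ (-(3 / 2) : ℝ) = 6 * √6 := by
    rw [one_div, Real.inv_rpow (by norm_num), Real.rpow_neg (by norm_num), inv_inv,
      show (3 / 2 : ℝ) = 1 + 1 / 2 by norm_num, Real.rpow_add (by norm_num), Real.rpow_one,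
      Real.sqrt_eq_rpow]
  have hpi : √Real.pi ≠ 0 := by positivity
  rw [expSqrtDensity, h, Real.sqrt_div (by norm_num)]
  norm_num
  field_simp
  norm_num

theorem expSqrtDensity_le {x : ℝ} (hx : 0 < x) :
    expSqrtDensity x ≤ 3 * √(6 / Real.pi) * Real.exp (-(3 / 2)) := by
  rw [← expSqrtDensity_one_sixth]
  have key : ∀ y : ℝ, 0 < y → y ^ (-(3 / 2) : ℝ) * Real.exp (-(1 / (4 * y))) =
      6 ^ (3 / 2 : ℝ) * (1 / (6 * y) * Real.exp (-(1 / (6 * y)))) ^ (3 / 2 : ℝ) := by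
    intro y hy
    rw [Real.mul_rpow (by positivity) (Real.exp_nonneg _), ← Real.exp_mul, ← mul_assoc,
      ← Real.mul_rpow (by norm_num) (by positivity), Real.rpow_neg hy.le,
      ← Real.inv_rpow hy.le]
    congr 2 <;> field_simp
    norm_num
  unfold expSqrtDensity
  rw [mul_assoc, mul_assoc, key x hx, key (1 / 6) (by norm_num)]
  refine mul_le_mul_of_nonneg_left (mul_le_mul_of_nonneg_left
    (Real.rpow_le_rpow (by positivity) ?_ (by norm_num)) (by positivity)) (by positivity)
  refine (Real.mul_exp_neg_le_exp_neg_one _).trans_eq ?_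
  norm_num

theorem measurable_expSqrtDensity : Measurable expSqrtDensity := by
  unfold expSqrtDensity
  fun_prop

/-- The (bilateral) Laplace transform at real points. -/
def laplaceTransform (f : ℝ → ℂ) (x : ℝ) : ℂ :=
  ∫ t, (Real.exp (-(x * t)) : ℂ) * f t

namespace IsTestFun

variable {f : ℝ → ℂ}

theorem exists_pos_le (hf : IsTestFun f) : ∃ a > 0, ∀ t, f t ≠ 0 → a ≤ t := by
  rcases (tsupport f).eq_empty_or_nonempty with h | h
  · refine ⟨1, one_pos, fun t ht => ?_⟩
    have := subset_tsupport f (Function.mem_support.2 ht)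
    simp [h] at this
  · obtain ⟨a, ha, hle⟩ := hf.2.1.isCompact.exists_isLeast h
    exact ⟨a, hf.2.2 ha, fun t ht => hle (subset_tsupport f (Function.mem_support.2 ht))⟩

theorem eq_zero_of_nonpos (hf : IsTestFun f) {t : ℝ} (ht : t ≤ 0) : f t = 0 := by
  by_contra h
  exact absurd (hf.2.2 (subset_tsupport f (Function.mem_support.2 h))) (not_lt.2 ht)

theorem integrable (hf : IsTestFun f) : Integrable f :=
  hf.1.continuous.integrable_of_hasCompactSupport hf.2.1

theorem integrable_exp_mul (hf : IsTestFun f) (x : ℝ) :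
    Integrable fun t => (Real.exp (-(x * t)) : ℂ) * f t :=
  Continuous.integrable_of_hasCompactSupport
    (by have := hf.1.continuous; fun_prop) (hf.2.1.mul_left)

protected theorem zero : IsTestFun 0 :=
  ⟨contDiff_const, HasCompactSupport.zero, by simp⟩

protected theorem add {g : ℝ → ℂ} (hf : IsTestFun f) (hg : IsTestFun g) : IsTestFun (f + g) :=
  ⟨hf.1.add hg.1, hf.2.1.add hg.2.1,
    (tsupport_add f g).trans (Set.union_subset hf.2.2 hg.2.2)⟩

protected theorem const_smul (hf : IsTestFun f) (c : ℂ) : IsTestFun (c • f) :=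
  ⟨hf.1.const_smul c, hf.2.1.smul_left (f := fun _ => c),
    (tsupport_smul_subset_right (fun _ => c) f).trans hf.2.2⟩

protected theorem sum {ι : Type*} (s : Finset ι) {F : ι → ℝ → ℂ} (hF : ∀ i, IsTestFun (F i)) :
    IsTestFun (∑ i ∈ s, F i) :=
  Finset.sum_induction F IsTestFun (fun _ _ => IsTestFun.add) IsTestFun.zero fun i _ => hF i

protected theorem deriv (hf : IsTestFun f) : IsTestFun (deriv f) :=
  ⟨(contDiff_infty_iff_deriv.1 hf.1).2, hf.2.1.deriv, (tsupport_deriv_subset).trans hf.2.2⟩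

protected theorem iteratedDeriv (hf : IsTestFun f) (n : ℕ) : IsTestFun (iteratedDeriv n f) := by
  induction n with
  | zero => simpa using hf
  | succ n ih => rw [iteratedDeriv_succ]; exact ih.deriv

theorem comp_sub_right (hf : IsTestFun f) {a : ℝ} (ha : 0 ≤ a) :
    IsTestFun fun t => f (t - a) := by
  have hts : tsupport (fun t => f (t - a)) = Set.preimage (Homeomorph.subRight a) (tsupport f) :=
    tsupport_comp_eq_preimage f (Homeomorph.subRight a)
  refine ⟨hf.1.comp (contDiff_id.sub contDiff_const),
    hf.2.1.comp_homeomorph (Homeomorph.subRight a), ?_⟩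
  rw [hts]
  intro t ht
  have : 0 < t - a := hf.2.2 ht
  simp only [Set.mem_Ioi]
  linarith

theorem continuous_laplaceTransform (hf : IsTestFun f) : Continuous (laplaceTransform f) := by
  have heq : laplaceTransform f =
      fun x => ∫ t in tsupport f, (Real.exp (-(x * t)) : ℂ) * f t := by
    funext x
    refine (setIntegral_eq_integral_of_forall_compl_eq_zero fun t ht => ?_).symm
    rw [image_eq_zero_of_notMem_tsupport ht, mul_zero]
  rw [heq]
  refine continuous_parametric_integral_of_continuous ?_ hf.2.1.isCompact
  have := hf.1.continuous
  fun_prop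

theorem exists_norm_laplaceTransform_le (hf : IsTestFun f) :
    ∃ a > 0, ∀ x, 0 ≤ x → ‖laplaceTransform f x‖ ≤ Real.exp (-a * x) * ∫ t, ‖f t‖ := by
  obtain ⟨a, ha, hle⟩ := hf.exists_pos_le
  refine ⟨a, ha, fun x hx => ?_⟩
  rw [← integral_const_mul]
  refine norm_integral_le_of_norm_le (hf.integrable.norm.const_mul _) (ae_of_all _ fun t => ?_)
  rw [norm_mul, Complex.norm_of_nonneg (Real.exp_nonneg _)]
  by_cases ht : f t = 0
  · simp [ht]
  · have := mul_le_mul_of_nonneg_right (hle t ht) hx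
    gcongr
    linarith

theorem integrableOn_norm_sq_laplaceTransform (hf : IsTestFun f) :
    IntegrableOn (fun x => ‖laplaceTransform f x‖ ^ 2) (Set.Ioi 0) := by
  obtain ⟨a, ha, hle⟩ := hf.exists_norm_laplaceTransform_le
  refine Integrable.mono' ((exp_neg_integrableOn_Ioi 0 (b := a * 2) (by positivity)).mul_const
    ((∫ t, ‖f t‖) ^ 2)) (by have := hf.continuous_laplaceTransform; fun_prop) ?_
  filter_upwards [ae_restrict_mem measurableSet_Ioi] with x hx
  rw [Real.norm_of_nonneg (by positivity)]
  refine (pow_le_pow_left₀ (norm_nonneg _) (hle x (le_of_lt hx)) 2).trans_eq ?_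
  rw [mul_pow, ← Real.exp_nat_mul]
  congr 2
  push_cast
  ring

theorem laplaceTransform_deriv (hf : IsTestFun f) (x : ℝ) :
    laplaceTransform (deriv f) x = x * laplaceTransform f x := by
  have hexp : ∀ t : ℝ, HasDerivAt (fun t : ℝ => (Real.exp (-(x * t)) : ℂ))
      (-x * (Real.exp (-(x * t)) : ℂ)) t := by
    intro t
    have h := (((hasDerivAt_id t).const_mul x).neg.exp).ofReal_comp
    refine h.congr_deriv ?_
    push_cast
    simp
    ring
  have hint := hf.integrable_exp_mul x
  have hint' : Integrable fun t => (-x * (Real.exp (-(x * t)) : ℂ)) * f t := by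
    simpa only [mul_assoc] using hint.const_mul (-x : ℂ)
  have h := integral_mul_deriv_eq_deriv_mul_of_integrable
    (u := fun t : ℝ => (Real.exp (-(x * t)) : ℂ)) (v := f) (v' := deriv f)
    (u' := fun t => -x * (Real.exp (-(x * t)) : ℂ)) (fun t _ => hexp t)
    (fun t _ => (hf.1.differentiable (by simp) t).hasDerivAt)
    (hf.deriv.integrable_exp_mul x) hint' hint
  rw [laplaceTransform, h, laplaceTransform, ← integral_neg, ← integral_const_mul]
  congr 1
  funext t
  ring

theorem laplaceTransform_iteratedDeriv (hf : IsTestFun f) (n : ℕ) (x : ℝ) :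
    laplaceTransform (iteratedDeriv n f) x = x ^ n * laplaceTransform f x := by
  induction n with
  | zero => simp
  | succ n ih =>
    rw [iteratedDeriv_succ, (hf.iteratedDeriv n).laplaceTransform_deriv, ih]
    ring

end IsTestFun

theorem laplaceTransform_comp_sub_right (f : ℝ → ℂ) (a x : ℝ) :
    laplaceTransform (fun t => f (t - a)) x = Real.exp (-(x * a)) * laplaceTransform f x := by
  have h := integral_sub_right_eq_self (μ := volume)
    (fun t => (Real.exp (-(x * (t + a))) : ℂ) * f t) a
  simp only [sub_add_cancel] at h
  rw [laplaceTransform, h, laplaceTransform, ← integral_const_mul]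
  congr 1
  funext t
  rw [← mul_assoc, ← Complex.ofReal_mul, ← Real.exp_add]
  congr 3
  ring

theorem laplaceTransform_sum_smul {ι : Type*} [Fintype ι] (c : ι → ℂ) {F : ι → ℝ → ℂ}
    (hF : ∀ i, IsTestFun (F i)) (x : ℝ) :
    laplaceTransform (∑ i, c i • F i) x = ∑ i, c i * laplaceTransform (F i) x := by
  simp only [laplaceTransform, ← integral_const_mul]
  rw [← integral_finsetSum _ fun i _ => ((hF i).integrable_exp_mul x).const_mul _]
  congr 1
  funext t
  simp only [Finset.sum_apply, Pi.smul_apply, smul_eq_mul, Finset.mul_sum]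
  exact Finset.sum_congr rfl fun i _ => by ring

/-- A Hankel form whose kernel is the Laplace transform of a bounded density `G` is, in terms of
the Laplace transform of the argument, multiplication by `G`. -/
theorem hankelQF_eq_integral {h G : ℝ → ℝ} {M : ℝ} (hG : Measurable G)
    (hM : ∀ x, 0 < x → |G x| ≤ M)
    (hh : ∀ t, 0 < t → h t = ∫ x in Set.Ioi (0 : ℝ), Real.exp (-(t * x)) * G x)
    {f : ℝ → ℂ} (hf : IsTestFun f) :
    hankelQF (fun t => (h t : ℂ)) f =
      ((∫ x in Set.Ioi (0 : ℝ), G x * ‖laplaceTransform f x‖ ^ 2 : ℝ) : ℂ) := by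
  have hfc := hf.1.continuous
  have hM0 : 0 ≤ M := (abs_nonneg _).trans (hM 1 one_pos)
  set K : ℝ → ℝ → ℂ := fun x t => (Real.exp (-(x * t)) : ℂ) * f t with hK
  have hKL : ∀ x, ∫ t in Set.Ioi (0 : ℝ), K x t = laplaceTransform f x := by
    intro x
    refine setIntegral_eq_integral_of_forall_compl_eq_zero fun t ht => ?_
    simp only [hK]
    rw [hf.eq_zero_of_nonpos (not_lt.1 ht), mul_zero]
  have hKle : ∀ x t, 0 < x → 0 < t → ‖K x t‖ ≤ ‖f t‖ := by
    intro x t hx ht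
    simp only [hK]
    rw [norm_mul, Complex.norm_of_nonneg (Real.exp_nonneg _)]
    refine mul_le_of_le_one_left (norm_nonneg _) (Real.exp_le_one_iff.2 ?_)
    have := mul_pos hx ht
    linarith
  have hGn : ∀ x, 0 < x → ‖(G x : ℂ)‖ ≤ M := by
    intro x hx
    rw [Complex.norm_real]
    exact hM x hx
  have hkernel : ∀ t ∈ Set.Ioi (0 : ℝ), ∀ s ∈ Set.Ioi (0 : ℝ),
      (h (t + s) : ℂ) * f s * (starRingEnd ℂ) (f t) =
        ∫ x in Set.Ioi (0 : ℝ), (G x : ℂ) * K x s * (starRingEnd ℂ) (K x t) := by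
    intro t ht s hs
    rw [hh (t + s) (add_pos ht hs), ← integral_complex_ofReal, mul_assoc, ← integral_mul_const]
    congr 1
    funext x
    simp only [hK, map_mul, Complex.conj_ofReal]
    rw [show -((t + s) * x) = -(x * s) + -(x * t) by ring, Real.exp_add]
    push_cast
    ring
  have hinner : ∀ t ∈ Set.Ioi (0 : ℝ),
      ∫ s in Set.Ioi (0 : ℝ), (h (t + s) : ℂ) * f s * (starRingEnd ℂ) (f t) =
        ∫ x in Set.Ioi (0 : ℝ),
          (G x : ℂ) * laplaceTransform f x * (starRingEnd ℂ) (K x t) := by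
    intro t ht
    rw [setIntegral_congr_fun measurableSet_Ioi (hkernel t ht), integral_integral_swap]
    · congr 1
      funext x
      rw [integral_mul_const, integral_const_mul, hKL]
    · have hb : Integrable (fun z : ℝ × ℝ => ‖f z.1‖ * (M * ‖f t‖ * Real.exp (-t * z.2)))
          ((volume.restrict (Set.Ioi 0)).prod (volume.restrict (Set.Ioi 0))) :=
        Integrable.mul_prod (f := fun s => ‖f s‖)
          (g := fun x => M * ‖f t‖ * Real.exp (-t * x)) hf.integrable.norm.integrableOn
          ((exp_neg_integrableOn_Ioi 0 ht).const_mul _)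
      refine hb.mono' ?_ ?_
      · have : Measurable (Function.uncurry fun s x =>
            (G x : ℂ) * K x s * (starRingEnd ℂ) (K x t)) := by
          simp only [hK, Function.uncurry_def]
          have := hfc.measurable
          fun_prop
        exact this.aestronglyMeasurable
      · rw [Measure.prod_restrict]
        filter_upwards [ae_restrict_mem (measurableSet_Ioi.prod measurableSet_Ioi)] with z hz
        obtain ⟨hs, hx⟩ := hz
        have h₁ := hKle z.2 z.1 hx hs
        have h₂ := hGn z.2 hx
        have h₃ : ‖K z.2 t‖ = ‖f t‖ * Real.exp (-t * z.2) := by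
          simp only [hK]
          rw [norm_mul, Complex.norm_of_nonneg (Real.exp_nonneg _), mul_comm]
          ring_nf
        simp only [Function.uncurry_def]
        rw [norm_mul, norm_mul, RCLike.norm_conj, h₃]
        calc _ ≤ M * ‖f z.1‖ * (‖f t‖ * Real.exp (-t * z.2)) := by gcongr
          _ = _ := by ring
  obtain ⟨a, ha, hLle⟩ := hf.exists_norm_laplaceTransform_le
  have hLm : Measurable (laplaceTransform f) := hf.continuous_laplaceTransform.measurable
  rw [hankelQF, setIntegral_congr_fun measurableSet_Ioi hinner, integral_integral_swap,
    ← integral_complex_ofReal]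
  · congr 1
    funext x
    rw [integral_const_mul, integral_conj, hKL, mul_assoc, Complex.mul_conj']
    push_cast
    rfl
  · have hb : Integrable
        (fun z : ℝ × ℝ => ‖f z.1‖ * (M * (∫ t, ‖f t‖) * Real.exp (-a * z.2)))
        ((volume.restrict (Set.Ioi 0)).prod (volume.restrict (Set.Ioi 0))) :=
      Integrable.mul_prod (f := fun s => ‖f s‖)
        (g := fun x => M * (∫ t, ‖f t‖) * Real.exp (-a * x)) hf.integrable.norm.integrableOn
        ((exp_neg_integrableOn_Ioi 0 ha).const_mul _)
    refine hb.mono' ?_ ?_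
    · have : Measurable (Function.uncurry fun t x =>
          (G x : ℂ) * laplaceTransform f x * (starRingEnd ℂ) (K x t)) := by
        simp only [hK, Function.uncurry_def]
        have := hfc.measurable
        fun_prop
      exact this.aestronglyMeasurable
    · rw [Measure.prod_restrict]
      filter_upwards [ae_restrict_mem (measurableSet_Ioi.prod measurableSet_Ioi)] with z hz
      obtain ⟨ht, hx⟩ := hz
      have h₁ := hKle z.2 z.1 hx ht
      have h₂ := hGn z.2 hx
      have h₃ := hLle z.2 (le_of_lt hx)
      simp only [Function.uncurry_def]
      rw [norm_mul, norm_mul, RCLike.norm_conj]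
      calc _ ≤ M * (Real.exp (-a * z.2) * ∫ t, ‖f t‖) * ‖f z.1‖ := by gcongr
        _ = _ := by ring

theorem abs_one_sub_mul_expSqrtDensity_le (γ : ℝ) {x : ℝ} (hx : 0 < x) :
    |1 - γ * expSqrtDensity x| ≤ 1 + |γ| * (3 * √(6 / Real.pi) * Real.exp (-(3 / 2))) := by
  refine (abs_sub _ _).trans ?_
  rw [abs_one, abs_mul, abs_of_nonneg (expSqrtDensity_nonneg hx)]
  have := expSqrtDensity_le hx
  gcongr

theorem hankelQF_inv_sub_exp_sqrt_eq_integral (γ : ℝ) {f : ℝ → ℂ} (hf : IsTestFun f) :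
    hankelQF (fun t : ℝ => ((t⁻¹ - γ * Real.exp (-Real.sqrt t) : ℝ) : ℂ)) f =
      ((∫ x in Set.Ioi (0 : ℝ),
        (1 - γ * expSqrtDensity x) * ‖laplaceTransform f x‖ ^ 2 : ℝ) : ℂ) := by
  refine hankelQF_eq_integral (h := fun t => t⁻¹ - γ * Real.exp (-Real.sqrt t))
    (G := fun x => 1 - γ * expSqrtDensity x) ?_
    (fun x hx => abs_one_sub_mul_expSqrtDensity_le γ hx) ?_ hf
  · have := measurable_expSqrtDensity
    fun_prop
  · intro t ht
    have hexp : IntegrableOn (fun x => Real.exp (-(t * x))) (Set.Ioi 0) := by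
      simpa only [neg_mul] using exp_neg_integrableOn_Ioi 0 ht
    have hdens : IntegrableOn (fun x => Real.exp (-(t * x)) * expSqrtDensity x) (Set.Ioi 0) := by
      refine (hexp.mul_const (3 * √(6 / Real.pi) * Real.exp (-(3 / 2)))).mono' ?_ ?_
      · have := measurable_expSqrtDensity
        exact Measurable.aestronglyMeasurable (by fun_prop)
      · filter_upwards [ae_restrict_mem measurableSet_Ioi] with x hx
        rw [norm_mul, Real.norm_of_nonneg (Real.exp_nonneg _),
          Real.norm_of_nonneg (expSqrtDensity_nonneg hx)]
        gcongr
        exact expSqrtDensity_le hx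
    have hone : ∫ x in Set.Ioi (0 : ℝ), Real.exp (-(t * x)) = t⁻¹ := by
      have := integral_exp_mul_Ioi (neg_lt_zero.2 ht) 0
      simpa [neg_mul, neg_div_neg_eq] using this
    simp only [mul_sub, mul_one, mul_left_comm _ γ]
    rw [integral_sub hexp (hdens.const_mul γ), integral_const_mul, hone,
      integral_exp_mul_expSqrtDensity ht]

theorem mul_exp_neg_six_mul_le {x y : ℝ} (hy : 0 ≤ y) (hxy : 0 ≤ (x - y) * (6 * y - 1)) :
    x * Real.exp (-(6 * x)) ≤ y * Real.exp (-(6 * y)) := by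
  have h : x ≤ y * Real.exp (6 * (x - y)) := by
    nlinarith [mul_le_mul_of_nonneg_left (Real.add_one_le_exp (6 * (x - y))) hy]
  calc x * Real.exp (-(6 * x)) ≤ y * Real.exp (6 * (x - y)) * Real.exp (-(6 * x)) := by gcongr
    _ = y * Real.exp (-(6 * y)) := by
      rw [mul_assoc, ← Real.exp_add]
      ring_nf

theorem mul_exp_neg_six_mul_lt {x : ℝ} (hx : x ≠ 1 / 6) :
    x * Real.exp (-(6 * x)) < 1 / 6 * Real.exp (-(6 * (1 / 6))) := by
  have h : x < 1 / 6 * Real.exp (6 * x - 1) := by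
    have := Real.add_one_lt_exp (x := 6 * x - 1) fun h => hx (by linarith)
    linarith
  calc x * Real.exp (-(6 * x)) < 1 / 6 * Real.exp (6 * x - 1) * Real.exp (-(6 * x)) := by gcongr
    _ = 1 / 6 * Real.exp (-(6 * (1 / 6))) := by
      rw [mul_assoc, ← Real.exp_add]
      ring_nf

theorem exists_mem_Icc_sum_mul_pow_ne_zero {N : ℕ} {c : Fin N → ℂ} (hc : c ≠ 0) {p q : ℝ}
    (hpq : p < q) : ∃ x ∈ Set.Icc p q, ∑ i, c i * (x : ℂ) ^ (i : ℕ) ≠ 0 := by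
  by_contra! h
  set P : Polynomial ℂ := ∑ i : Fin N, Polynomial.monomial (i : ℕ) (c i) with hP
  have heval : ∀ z, P.eval z = ∑ i, c i * z ^ (i : ℕ) := fun z => by
    simp [hP, Polynomial.eval_finsetSum]
  have hP0 : P = 0 := by
    refine Polynomial.eq_zero_of_infinite_isRoot P
      (((Set.Icc_infinite hpq).image Complex.ofReal_injective.injOn).mono ?_)
    rintro _ ⟨x, hx, rfl⟩
    exact (heval x).trans (h x hx)
  refine hc (funext fun i => ?_)
  have : P.coeff i = c i := by
    simp [hP, Polynomial.coeff_monomial, Fin.val_inj]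
  rw [← this, hP0, Polynomial.coeff_zero, Pi.zero_apply]

/-- Coercivity of the quadratic form of a linearly independent family of continuous functions,
here the monomials times a zero-free function. -/
theorem exists_pos_mul_norm_sq_le_integral {N : ℕ} {w : ℝ → ℂ} (hw : Continuous w)
    (hw0 : ∀ x, w x ≠ 0) {p q : ℝ} (hpq : p < q) :
    ∃ m > 0, ∀ c : Fin N → ℂ,
      m * ‖c‖ ^ 2 ≤ ∫ x in p..q, ‖∑ i, c i * ((x : ℂ) ^ (i : ℕ) * w x)‖ ^ 2 := by
  set A : (Fin N → ℂ) → ℝ :=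
    fun c => ∫ x in p..q, ‖∑ i, c i * ((x : ℂ) ^ (i : ℕ) * w x)‖ ^ 2 with hA
  have hcont : Continuous A :=
    intervalIntegral.continuous_parametric_intervalIntegral_of_continuous
      (by fun_prop) continuous_const
  have hpos : ∀ c, c ≠ 0 → 0 < A c := by
    intro c hc
    refine intervalIntegral.integral_pos hpq (by fun_prop) (fun x _ => by positivity) ?_
    obtain ⟨x, hx, hne⟩ := exists_mem_Icc_sum_mul_pow_ne_zero hc hpq
    refine ⟨x, hx, pow_pos (norm_pos_iff.2 ?_) 2⟩
    simp only [← mul_assoc, ← Finset.sum_mul]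
    exact mul_ne_zero hne (hw0 x)
  have hsmul : ∀ (r : ℝ) c, A ((r : ℂ) • c) = r ^ 2 * A c := by
    intro r c
    simp only [hA]
    rw [← intervalIntegral.integral_const_mul]
    congr 1
    funext x
    simp only [Pi.smul_apply, smul_eq_mul, mul_assoc, ← Finset.mul_sum]
    rw [norm_mul, mul_pow, Complex.norm_real, Real.norm_eq_abs, sq_abs]
  rcases (Metric.sphere (0 : Fin N → ℂ) 1).eq_empty_or_nonempty with hemp | hne
  · refine ⟨1, one_pos, fun c => ?_⟩
    by_cases hc : c = 0
    · simp [hc]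
    · have hmem : ((‖c‖⁻¹ : ℝ) : ℂ) • c ∈ Metric.sphere (0 : Fin N → ℂ) 1 := by
        simp [norm_smul, hc]
      simp [hemp] at hmem
  · obtain ⟨c₀, hc₀, hmin⟩ := (isCompact_sphere _ _).exists_isMinOn hne hcont.continuousOn
    have hc₀0 : c₀ ≠ 0 := by
      rintro rfl
      simp at hc₀
    refine ⟨A c₀, hpos c₀ hc₀0, fun c => ?_⟩
    by_cases hc : c = 0
    · simp [hc]
    · have hmem : ((‖c‖⁻¹ : ℝ) : ℂ) • c ∈ Metric.sphere (0 : Fin N → ℂ) 1 := by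
        simp [norm_smul, hc]
      have hle : A c₀ ≤ A (((‖c‖⁻¹ : ℝ) : ℂ) • c) := hmin hmem
      have hcn : 0 < ‖c‖ := norm_pos_iff.2 hc
      rw [hsmul] at hle
      calc A c₀ * ‖c‖ ^ 2 ≤ ‖c‖⁻¹ ^ 2 * A c * ‖c‖ ^ 2 := by gcongr
        _ = A c := by field_simp

theorem exists_isTestFun_laplaceTransform_ne_zero :
    ∃ ψ, IsTestFun ψ ∧ ∀ x, laplaceTransform ψ x ≠ 0 := by
  let φ : ContDiffBump (2 : ℝ) := ⟨1 / 2, 1, by norm_num, by norm_num⟩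
  refine ⟨fun t => (φ t : ℂ), ⟨Complex.ofRealCLM.contDiff.comp φ.contDiff,
    φ.hasCompactSupport.comp_left (g := fun r : ℝ => (r : ℂ)) rfl, ?_⟩, fun x => ?_⟩
  · have hsub : tsupport (fun t => (φ t : ℂ)) ⊆ tsupport φ :=
      closure_mono (Function.support_comp_subset (g := fun r : ℝ => (r : ℂ)) rfl φ)
    refine hsub.trans ?_
    rw [φ.tsupport_eq]
    intro t ht
    have := (abs_le.1 (Metric.mem_closedBall.1 ht)).1
    change -1 ≤ t - 2 at this
    simp only [Set.mem_Ioi]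
    linarith
  · have hpos : 0 < ∫ t, Real.exp (-(x * t)) * φ t := by
      refine Continuous.integral_pos_of_hasCompactSupport_nonneg_nonzero (x := 2)
        (by have := φ.continuous; fun_prop) φ.hasCompactSupport.mul_left
        (fun t => mul_nonneg (Real.exp_nonneg _) φ.nonneg) ?_
      have : φ 2 = 1 := φ.one_of_mem_closedBall (by simp [φ.rIn_pos.le])
      rw [this]
      positivity
    have heq : laplaceTransform (fun t => (φ t : ℂ)) x =
        ((∫ t, Real.exp (-(x * t)) * φ t : ℝ) : ℂ) := by
      rw [← integral_complex_ofReal]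
      simp [laplaceTransform]
    rw [heq]
    exact_mod_cast hpos.ne'

theorem continuousAt_expSqrtDensity {x : ℝ} (hx : 0 < x) : ContinuousAt expSqrtDensity x := by
  unfold expSqrtDensity
  have h4 : 4 * x ≠ 0 := by positivity
  have := Real.continuousAt_rpow_const x (-(3 / 2)) (Or.inl hx.ne')
  fun_prop (disch := assumption)

/-- For `γ` above the threshold, the weight `1 - γ σ` is strictly negative near `1/6`, while
`x e^{-6x}` is larger on a neighbourhood of `1/6` than it is where the weight is nonnegative. -/
theorem exists_concentration {γ : ℝ}
    (hγ : (3 * Real.sqrt (6 / Real.pi) * Real.exp (-(3 / 2)))⁻¹ < γ) :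
    ∃ δ > 0, ∃ p > 0, ∃ q > p, ∃ α ≥ 0, ∃ β > α,
      (∀ x ∈ Set.Icc p q, 1 - γ * expSqrtDensity x ≤ -δ ∧ β ≤ x * Real.exp (-(6 * x))) ∧
      ∀ x, 0 < x → 1 - γ * expSqrtDensity x ≤ 0 ∨ x * Real.exp (-(6 * x)) ≤ α := by
  have hν : 0 < 3 * Real.sqrt (6 / Real.pi) * Real.exp (-(3 / 2)) := by positivity
  have hneg : 1 - γ * expSqrtDensity (1 / 6) < 0 := by
    rw [expSqrtDensity_one_sixth]
    have := (inv_lt_iff_one_lt_mul₀ hν).1 hγ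
    linarith
  set δ := -(1 - γ * expSqrtDensity (1 / 6)) / 2 with hδ
  have hcont : ContinuousAt (fun x => 1 - γ * expSqrtDensity x) (1 / 6) := by
    have := continuousAt_expSqrtDensity (x := 1 / 6) (by norm_num)
    fun_prop
  obtain ⟨r₀, hr₀, hr₀'⟩ := Metric.eventually_nhds_iff.1
    (hcont.eventually_lt_const (u := -δ) (by linarith))
  obtain ⟨r, hr, hrr₀, hr6⟩ : ∃ r > 0, r < r₀ ∧ r < 1 / 6 :=
    ⟨min r₀ (1 / 6) / 2, by positivity, by linarith [min_le_left r₀ (1 / 6)],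
      by linarith [min_le_right r₀ (1 / 6)]⟩
  set g : ℝ → ℝ := fun x => x * Real.exp (-(6 * x)) with hg
  set α := max (g (1 / 6 - r)) (g (1 / 6 + r)) with hα
  have hα0 : 0 ≤ α := le_max_of_le_right (by simp only [hg]; positivity)
  have hαlt : α < g (1 / 6) :=
    max_lt (mul_exp_neg_six_mul_lt (by linarith)) (mul_exp_neg_six_mul_lt (by linarith))
  have hgc : Continuous g := by fun_prop
  obtain ⟨ε₀, hε₀, hε₀'⟩ := Metric.eventually_nhds_iff.1
    ((hgc.tendsto (1 / 6)).eventually_const_lt (u := (α + g (1 / 6)) / 2) (by linarith))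
  obtain ⟨ε, hε, hεε₀, hεr⟩ : ∃ ε > 0, ε < ε₀ ∧ ε < r :=
    ⟨min ε₀ r / 2, by positivity, by linarith [min_le_left ε₀ r, lt_min hε₀ hr],
      by linarith [min_le_right ε₀ r, lt_min hε₀ hr]⟩
  refine ⟨δ, by linarith, 1 / 6 - ε, by linarith, 1 / 6 + ε, by linarith, α, hα0,
    (α + g (1 / 6)) / 2, by linarith, fun x hx => ⟨?_, ?_⟩, fun x hx => ?_⟩
  · refine (hr₀' ?_).le
    rw [Real.dist_eq, abs_lt]
    constructor <;> linarith [hx.1, hx.2]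
  · refine (hε₀' ?_).le
    rw [Real.dist_eq, abs_lt]
    constructor <;> linarith [hx.1, hx.2]
  · rcases le_total x (1 / 6 - r) with h | h
    · exact Or.inr ((mul_exp_neg_six_mul_le (by linarith) (by nlinarith)).trans (le_max_left _ _))
    rcases le_total (1 / 6 + r) x with h' | h'
    · exact Or.inr ((mul_exp_neg_six_mul_le (by linarith) (by nlinarith)).trans (le_max_right _ _))
    · left
      have : 1 - γ * expSqrtDensity x < -δ := by
        refine hr₀' ?_
        rw [Real.dist_eq, abs_lt]
        constructor <;> linarith
      linarith

theorem exists_forall_integral_neg {γ : ℝ} (hγ0 : 0 ≤ γ)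
    (hγ : (3 * Real.sqrt (6 / Real.pi) * Real.exp (-(3 / 2)))⁻¹ < γ) (N : ℕ) :
    ∃ F : Fin N → ℝ → ℂ, (∀ i, IsTestFun (F i)) ∧ ∀ c : Fin N → ℂ, c ≠ 0 →
      ∫ x in Set.Ioi (0 : ℝ), (1 - γ * expSqrtDensity x) *
        ‖laplaceTransform (∑ i, c i • F i) x‖ ^ 2 < 0 := by
  obtain ⟨δ, hδ, p, hp, q, hpq, α, hα, β, hαβ, hIcc, hIoi⟩ := exists_concentration hγ
  obtain ⟨ψ, hψ, hψ0⟩ := exists_isTestFun_laplaceTransform_ne_zero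
  have hβ : 0 < β := hα.trans_lt hαβ
  set S : (Fin N → ℂ) → ℝ → ℂ :=
    fun c x => ∑ i, c i * ((x : ℂ) ^ (i : ℕ) * laplaceTransform ψ x) with hS
  have hSL : ∀ c x, S c x = laplaceTransform (∑ i, c i • iteratedDeriv (i : ℕ) ψ) x := by
    intro c x
    rw [laplaceTransform_sum_smul c (fun i => hψ.iteratedDeriv i)]
    simp only [hS, hψ.laplaceTransform_iteratedDeriv]
  have hSint : ∀ c, IntegrableOn (fun x => ‖S c x‖ ^ 2) (Set.Ioi 0) := by
    intro c
    simp only [hSL]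
    exact (IsTestFun.sum Finset.univ fun i : Fin N =>
      (hψ.iteratedDeriv i).const_smul (c i)).integrableOn_norm_sq_laplaceTransform
  obtain ⟨m, hm, hlower⟩ := exists_pos_mul_norm_sq_le_integral (N := N)
    hψ.continuous_laplaceTransform hψ0 hpq
  obtain ⟨K, hK, hupper⟩ : ∃ K ≥ 0, ∀ c, ∫ x in Set.Ioi (0 : ℝ), ‖S c x‖ ^ 2 ≤ K * ‖c‖ ^ 2 := by
    refine ⟨∫ x in Set.Ioi (0 : ℝ),
      N * ∑ i : Fin N, ‖laplaceTransform (iteratedDeriv (i : ℕ) ψ) x‖ ^ 2,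
      integral_nonneg fun x => by positivity, fun c => ?_⟩
    rw [← integral_mul_const]
    refine integral_mono (hSint c) (((integrable_finsetSum _ fun i _ =>
      (hψ.iteratedDeriv _).integrableOn_norm_sq_laplaceTransform).const_mul _).mul_const _)
      fun x => ?_
    simp only [hS, hψ.laplaceTransform_iteratedDeriv]
    have h₁ : ‖∑ i, c i * ((x : ℂ) ^ (i : ℕ) * laplaceTransform ψ x)‖ ≤
        ‖c‖ * ∑ i : Fin N, ‖(x : ℂ) ^ (i : ℕ) * laplaceTransform ψ x‖ := by
      rw [Finset.mul_sum]
      refine norm_sum_le_of_le _ fun i _ => ?_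
      rw [norm_mul]
      gcongr
      exact norm_le_pi_norm c i
    have h₂ := sq_sum_le_card_mul_sum_sq (s := Finset.univ)
      (f := fun i : Fin N => ‖(x : ℂ) ^ (i : ℕ) * laplaceTransform ψ x‖)
    rw [Finset.card_univ, Fintype.card_fin] at h₂
    calc _ ≤ (‖c‖ * ∑ i : Fin N, ‖(x : ℂ) ^ (i : ℕ) * laplaceTransform ψ x‖) ^ 2 := by gcongr
      _ = (∑ i : Fin N, ‖(x : ℂ) ^ (i : ℕ) * laplaceTransform ψ x‖) ^ 2 * ‖c‖ ^ 2 := by ring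
      _ ≤ _ := by gcongr
  obtain ⟨n, hn⟩ : ∃ n : ℕ, α ^ (2 * n) * K < δ * β ^ (2 * n) * m := by
    have hlt : (α / β) ^ 2 < 1 :=
      pow_lt_one₀ (by positivity) ((div_lt_one hβ).2 hαβ) two_ne_zero
    obtain ⟨n, hn⟩ := exists_pow_lt_of_lt_one (y := (α / β) ^ 2)
      (show 0 < δ * m / (K + 1) by positivity) hlt
    refine ⟨n, ?_⟩
    rw [← pow_mul, div_pow, div_lt_div_iff₀ (by positivity) (by positivity)] at hn
    nlinarith [pow_nonneg hα (2 * n)]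
  have hFtest : ∀ i : Fin N, IsTestFun fun t => iteratedDeriv (n + i) ψ (t - 6 * n) :=
    fun i => (hψ.iteratedDeriv _).comp_sub_right (by positivity)
  refine ⟨fun i t => iteratedDeriv (n + i) ψ (t - 6 * n), hFtest, fun c hc => ?_⟩
  have hFL : ∀ x, 0 < x →
      ‖laplaceTransform (∑ i, c i • fun t => iteratedDeriv (n + i) ψ (t - 6 * n)) x‖ ^ 2 =
        (x * Real.exp (-(6 * x))) ^ (2 * n) * ‖S c x‖ ^ 2 := by
    intro x hx
    have : laplaceTransform (∑ i, c i • fun t => iteratedDeriv (n + i) ψ (t - 6 * n)) x =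
        ((x * Real.exp (-(6 * x)) : ℝ) : ℂ) ^ n * S c x := by
      rw [laplaceTransform_sum_smul c hFtest]
      simp only [hS, Finset.mul_sum]
      refine Finset.sum_congr rfl fun i _ => ?_
      rw [laplaceTransform_comp_sub_right, hψ.laplaceTransform_iteratedDeriv,
        show -(x * (6 * n)) = n * -(6 * x) by ring, Real.exp_nat_mul]
      push_cast
      ring
    rw [this, norm_mul, norm_pow, Complex.norm_real, Real.norm_of_nonneg (by positivity)]
    ring
  have htest := IsTestFun.sum Finset.univ fun i => (hFtest i).const_smul (c i)
  have hind : IntegrableOn ((Set.Ioc p q).indicator fun x => ‖S c x‖ ^ 2) (Set.Ioi 0) :=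
    (hSint c).indicator measurableSet_Ioc
  have hpoint : ∀ x ∈ Set.Ioi (0 : ℝ), (1 - γ * expSqrtDensity x) *
      ‖laplaceTransform (∑ i, c i • fun t => iteratedDeriv (n + i) ψ (t - 6 * n)) x‖ ^ 2 ≤
      α ^ (2 * n) * ‖S c x‖ ^ 2 -
        δ * β ^ (2 * n) * (Set.Ioc p q).indicator (fun x => ‖S c x‖ ^ 2) x := by
    intro x hx
    have hx0 : 0 < x := hx
    rw [hFL x hx]
    have hle1 : 1 - γ * expSqrtDensity x ≤ 1 := by
      have := mul_nonneg hγ0 (expSqrtDensity_nonneg hx0)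
      linarith
    have hgn : 0 ≤ (x * Real.exp (-(6 * x))) ^ (2 * n) * ‖S c x‖ ^ 2 := by positivity
    have hαS : 0 ≤ α ^ (2 * n) * ‖S c x‖ ^ 2 := by positivity
    by_cases hmem : x ∈ Set.Ioc p q
    · obtain ⟨h₁, h₂⟩ := hIcc x (Set.Ioc_subset_Icc_self hmem)
      rw [Set.indicator_of_mem hmem]
      have h₃ : β ^ (2 * n) * ‖S c x‖ ^ 2 ≤
          (x * Real.exp (-(6 * x))) ^ (2 * n) * ‖S c x‖ ^ 2 := by gcongr
      have h₄ := mul_le_mul_of_nonneg_right h₁ hgn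
      have h₅ := mul_le_mul_of_nonneg_left h₃ hδ.le
      linarith
    · rw [Set.indicator_of_notMem hmem, mul_zero, sub_zero]
      rcases hIoi x hx0 with h | h
      · exact (mul_nonpos_of_nonpos_of_nonneg h hgn).trans hαS
      · refine (mul_le_of_le_one_left hgn hle1).trans ?_
        gcongr
  have hQint : IntegrableOn (fun x => (1 - γ * expSqrtDensity x) *
      ‖laplaceTransform (∑ i, c i • fun t => iteratedDeriv (n + i) ψ (t - 6 * n)) x‖ ^ 2)
      (Set.Ioi 0) := by
    refine Integrable.bdd_mul (c := 1 + |γ| * (3 * √(6 / Real.pi) * Real.exp (-(3 / 2))))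
      htest.integrableOn_norm_sq_laplaceTransform ?_ ?_
    · have := measurable_expSqrtDensity
      exact Measurable.aestronglyMeasurable (by fun_prop)
    · filter_upwards [ae_restrict_mem measurableSet_Ioi] with x hx
      exact abs_one_sub_mul_expSqrtDensity_le γ hx
  have hsub : Set.Ioc p q ⊆ Set.Ioi 0 := fun x hx => lt_trans hp hx.1
  have hind_eq : ∫ x in Set.Ioi (0 : ℝ), (Set.Ioc p q).indicator (fun x => ‖S c x‖ ^ 2) x =
      ∫ x in p..q, ‖S c x‖ ^ 2 := by
    rw [intervalIntegral.integral_of_le hpq.le, setIntegral_indicator measurableSet_Ioc,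
      Set.inter_eq_right.2 hsub]
  have hmono := setIntegral_mono_on hQint
    (((hSint c).const_mul _).sub (hind.const_mul _)) measurableSet_Ioi hpoint
  refine hmono.trans_lt ?_
  rw [integral_sub' ((hSint c).const_mul _) (hind.const_mul _), integral_const_mul,
    integral_const_mul, hind_eq, sub_neg]
  have hcn : 0 < ‖c‖ ^ 2 := pow_pos (norm_pos_iff.2 hc) 2
  calc α ^ (2 * n) * ∫ x in Set.Ioi (0 : ℝ), ‖S c x‖ ^ 2
      ≤ α ^ (2 * n) * (K * ‖c‖ ^ 2) := by gcongr; exact hupper c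
    _ = α ^ (2 * n) * K * ‖c‖ ^ 2 := by ring
    _ < δ * β ^ (2 * n) * m * ‖c‖ ^ 2 := by gcongr
    _ = δ * β ^ (2 * n) * (m * ‖c‖ ^ 2) := by ring
    _ ≤ δ * β ^ (2 * n) * ∫ x in p..q, ‖S c x‖ ^ 2 := by gcongr; exact hlower c

/-- For `h_γ(t) = t⁻¹ - γ e^{-√t}` and `ν = 3√(6/π) e^{-3/2}`: the Hankel form is positive
when `γ ≤ ν⁻¹`, and has infinitely many negative squares when `γ > ν⁻¹`. -/
theorem carleman_perturbed_by_exp_sqrt (γ : ℝ) :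
    ((γ ≤ (3 * Real.sqrt (6 / Real.pi) * Real.exp (-(3/2)))⁻¹) →
      ∀ f : ℝ → ℂ, IsTestFun f →
        0 ≤ hankelQF
          (fun t : ℝ => ((t⁻¹ - γ * Real.exp (-Real.sqrt t) : ℝ) : ℂ)) f)
    ∧ (((3 * Real.sqrt (6 / Real.pi) * Real.exp (-(3/2)))⁻¹ < γ) →
      ∀ N : ℕ, negSubspace (hankelQF
        (fun t : ℝ => ((t⁻¹ - γ * Real.exp (-Real.sqrt t) : ℝ) : ℂ))) N) := by
  have hν : 0 < 3 * Real.sqrt (6 / Real.pi) * Real.exp (-(3 / 2)) := by positivity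
  refine ⟨fun hγ f hf => ?_, fun hγ N => ?_⟩
  · rw [hankelQF_inv_sub_exp_sqrt_eq_integral γ hf, Complex.zero_le_real]
    refine setIntegral_nonneg measurableSet_Ioi fun x hx => mul_nonneg ?_ (by positivity)
    have hσ := expSqrtDensity_nonneg hx
    have h₁ := mul_le_mul_of_nonneg_right hγ hσ
    have h₂ := mul_le_mul_of_nonneg_left (expSqrtDensity_le hx) (inv_pos.2 hν).le
    rw [inv_mul_cancel₀ hν.ne'] at h₂
    linarith
  · obtain ⟨F, hF, hneg⟩ := exists_forall_integral_neg ((inv_pos.2 hν).trans hγ).le hγ N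
    have htest : ∀ c : Fin N → ℂ, IsTestFun (∑ i, c i • F i) := fun c =>
      IsTestFun.sum _ fun i => (hF i).const_smul (c i)
    have hinj : Function.Injective (Fintype.linearCombination ℂ F) := by
      refine (injective_iff_map_eq_zero _).2 fun c hc => ?_
      by_contra hc0
      have h := hneg c hc0
      rw [← Fintype.linearCombination_apply, hc] at h
      simp [laplaceTransform] at h
    refine ⟨(Fintype.linearCombination ℂ F).range, ?_, ?_, ?_⟩
    · rintro _ ⟨c, rfl⟩
      exact htest c
    · rw [LinearMap.finrank_range_of_inj hinj, Module.finrank_fin_fun]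
    · rintro _ ⟨c, rfl⟩ hne
      have hc : c ≠ 0 := fun h => hne (by rw [h, map_zero])
      rw [Fintype.linearCombination_apply, hankelQF_inv_sub_exp_sqrt_eq_integral γ (htest c)]
      exact_mod_cast hneg c hc
end
end
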